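/- arXiv:1808.06234 — 3 statements merged into one kernel-verified Lean document; each statement's English description precedes it below -/
import Mathlib

section
/- Let f ∈ C_c^∞(ℝ²). Then there is an absolute constant C such that ‖f‖_{L⁴(ℝ²)} ≤ C ‖f‖_{L¹(ℝ²)}^{1/2} ‖∇²f‖_{L²(ℝ²)}^{1/2}. -/
open MeasureTheory

/-!
Three inequalities are combined:
`‖f‖₄² ≲ ‖f‖₂ ‖∇f‖₂`, which is the Sobolev inequality `‖u‖₂ ≲ ‖∇u‖₁` in the plane applied to
`u = |f|²`; `‖∇f‖₂² ≲ ‖f‖₂ ‖∇²f‖₂`, by integration by parts; and `‖f‖₂³ ≤ ‖f‖₁ ‖f‖₄²`, by Hölder.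
Together they give `‖f‖₄⁴ ≲ ‖f‖₂² ‖∇f‖₂² ≲ ‖f‖₂³ ‖∇²f‖₂ ≤ ‖f‖₁ ‖f‖₄² ‖∇²f‖₂`, and one divides
by `‖f‖₄²`.
-/

open Module (finrank)
open scoped NNReal ENNReal

section Interpolation

variable {α F : Type*} [MeasurableSpace α] {μ : Measure α} [NormedAddCommGroup F] {f : α → F}

theorem eLpNorm_le_eLpNorm_rpow_mul_eLpNorm_rpow (hf : AEStronglyMeasurable f μ)
    {p q r : ℝ≥0∞} {s t : ℝ} (hs : 0 < s) (ht : 0 < t) (hst : s + t = 1)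
    (hr : r⁻¹ = ENNReal.ofReal s / p + ENNReal.ofReal t / q) :
    eLpNorm f r μ ≤ eLpNorm f p μ ^ s * eLpNorm f q μ ^ t := by
  have : ENNReal.HolderTriple (p / ENNReal.ofReal s) (q / ENNReal.ofReal t) r :=
    ⟨by rw [ENNReal.inv_div (.inl (by simp)) (.inl (by simpa using hs)),
      ENNReal.inv_div (.inl (by simp)) (.inl (by simpa using ht)), hr]⟩
  have hsplit (x : α) : ‖f x‖ = ‖f x‖ ^ s * ‖f x‖ ^ t := by
    rw [← Real.rpow_add_of_nonneg (norm_nonneg _) hs.le ht.le, hst, Real.rpow_one]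
  calc eLpNorm f r μ = eLpNorm (fun x ↦ ‖f x‖ ^ s * ‖f x‖ ^ t) r μ := by
        simp_rw [← hsplit, eLpNorm_norm]
    _ ≤ eLpNorm (fun x ↦ ‖f x‖ ^ s) (p / ENNReal.ofReal s) μ
          * eLpNorm (fun x ↦ ‖f x‖ ^ t) (q / ENNReal.ofReal t) μ :=
        eLpNorm_smul_le_mul_eLpNorm (f := fun x ↦ ‖f x‖ ^ t) (φ := fun x ↦ ‖f x‖ ^ s)
          (hf.norm.aemeasurable.pow_const t).aestronglyMeasurable
          (hf.norm.aemeasurable.pow_const s).aestronglyMeasurable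
    _ = eLpNorm f p μ ^ s * eLpNorm f q μ ^ t := by
        rw [eLpNorm_norm_rpow f hs, eLpNorm_norm_rpow f ht,
          ENNReal.div_mul_cancel (by simpa using hs) (by simp),
          ENNReal.div_mul_cancel (by simpa using ht) (by simp)]

theorem eLpNorm_two_pow_three_le (hf : AEStronglyMeasurable f μ) :
    eLpNorm f 2 μ ^ 3 ≤ eLpNorm f 1 μ * eLpNorm f 4 μ ^ 2 := by
  have hexp : (2 : ℝ≥0∞)⁻¹ = ENNReal.ofReal (1 / 3) / 1 + ENNReal.ofReal (2 / 3) / 4 := by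
    rw [← ENNReal.toReal_eq_toReal_iff' (by simp) (by finiteness),
      ENNReal.toReal_add (by finiteness) (by finiteness)]
    norm_num [ENNReal.toReal_div, ENNReal.toReal_ofReal]
  calc eLpNorm f 2 μ ^ 3
      ≤ (eLpNorm f 1 μ ^ (1 / 3 : ℝ) * eLpNorm f 4 μ ^ (2 / 3 : ℝ)) ^ 3 := by
        gcongr
        exact eLpNorm_le_eLpNorm_rpow_mul_eLpNorm_rpow hf (by norm_num) (by norm_num)
          (by norm_num) hexp
    _ = eLpNorm f 1 μ * eLpNorm f 4 μ ^ 2 := by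
        rw [mul_pow]
        simp only [← ENNReal.rpow_natCast, ← ENNReal.rpow_mul]
        norm_num

theorem sq_eLpNorm_two_eq_lintegral : eLpNorm f 2 μ ^ 2 = ∫⁻ x, ‖f x‖ₑ ^ 2 ∂μ := by
  simpa using eLpNorm_nnreal_pow_eq_lintegral (f := f) (μ := μ) (p := 2) two_ne_zero

end Interpolation

theorem enorm_fderiv_fderiv {𝕜 E F : Type*} [NontriviallyNormedField 𝕜] [NormedAddCommGroup E]
    [NormedSpace 𝕜 E] [NormedAddCommGroup F] [NormedSpace 𝕜 F] (f : E → F) (x : E) :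
    ‖fderiv 𝕜 (fderiv 𝕜 f) x‖ₑ = ‖iteratedFDeriv 𝕜 2 f x‖ₑ := by
  rw [← ofReal_norm, ← ofReal_norm, ← norm_iteratedFDeriv_one, norm_iteratedFDeriv_fderiv]

theorem exists_sq_enorm_le_mul_sum_sq_enorm_apply_basis {𝕜 E F ι : Type*}
    [NontriviallyNormedField 𝕜] [CompleteSpace 𝕜] [NormedAddCommGroup E] [NormedSpace 𝕜 E]
    [NormedAddCommGroup F] [NormedSpace 𝕜 F] [Fintype ι] (v : Module.Basis ι 𝕜 E) :
    ∃ C : ℝ≥0, ∀ L : E →L[𝕜] F, ‖L‖ₑ ^ 2 ≤ C * ∑ i, ‖L (v i)‖ₑ ^ 2 := by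
  obtain ⟨C, -, hC⟩ := v.exists_opNNNorm_le (F := F)
  refine ⟨C ^ 2, fun L ↦ ?_⟩
  have hle (i : ι) : ‖L (v i)‖₊ ≤ NNReal.sqrt (∑ j, ‖L (v j)‖₊ ^ 2) :=
    NNReal.le_sqrt_iff_sq_le.2 <|
      Finset.single_le_sum (f := fun j ↦ ‖L (v j)‖₊ ^ 2) (fun _ _ ↦ zero_le) (Finset.mem_univ i)
  have hL : ‖L‖₊ ^ 2 ≤ C ^ 2 * ∑ i, ‖L (v i)‖₊ ^ 2 := by
    simpa only [mul_pow, NNReal.sq_sqrt] using pow_le_pow_left' (hC _ hle) 2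
  simp only [enorm_eq_nnnorm]
  exact_mod_cast hL

section Derivatives

variable {E F : Type*} [NormedAddCommGroup E] [NormedSpace ℝ E] [FiniteDimensional ℝ E]
  [MeasurableSpace E] [BorelSpace E] (μ : Measure E) [μ.IsAddHaarMeasure]
  [NormedAddCommGroup F] [InnerProductSpace ℝ F] {f : E → F}

theorem sq_eLpNorm_two_mul_le (hf : ContDiff ℝ 1 f) (hfc : HasCompactSupport f) {p : ℝ≥0}
    (hp : NNReal.HolderConjugate (finrank ℝ E) p) (q r : ℝ≥0∞) [q.HolderConjugate r] :
    eLpNorm f (2 * p) μ ^ 2 ≤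
      2 * eLpNormLESNormFDerivOneConst μ p * (eLpNorm f q μ * eLpNorm (fderiv ℝ f) r μ) := by
  have hDf : Continuous (fderiv ℝ f) := hf.continuous_fderiv one_ne_zero
  have hderiv (x : E) :
      fderiv ℝ (fun y ↦ ‖f y‖ ^ 2) x = 2 • (innerSL ℝ (f x)).comp (fderiv ℝ f x) :=
    (hf.differentiable one_ne_zero x).hasFDerivAt.norm_sq.fderiv
  have hbound (x : E) : ‖2 • (innerSL ℝ (f x)).comp (fderiv ℝ f x)‖₊
      ≤ 2 * ‖f x‖₊ * ‖fderiv ℝ f x‖₊ := by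
    have hinner : ‖innerSL ℝ (f x)‖₊ = ‖f x‖₊ := NNReal.eq (innerSL_apply_norm ..)
    rw [← Nat.cast_smul_eq_nsmul ℝ, nnnorm_smul, mul_assoc, ← hinner]
    simpa using (innerSL ℝ (f x)).opNNNorm_comp_le (fderiv ℝ f x)
  have hu : HasCompactSupport fun x ↦ ‖f x‖ ^ 2 := hfc.comp_left (g := fun y ↦ ‖y‖ ^ 2) (by simp)
  calc eLpNorm f (2 * p) μ ^ 2 = eLpNorm (fun x ↦ ‖f x‖ ^ 2) p μ := by
        simpa [mul_comm] using (eLpNorm_norm_rpow (p := (p : ℝ≥0∞)) (μ := μ) f two_pos).symm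
    _ ≤ eLpNormLESNormFDerivOneConst μ p * eLpNorm (fderiv ℝ fun x ↦ ‖f x‖ ^ 2) 1 μ :=
        eLpNorm_le_eLpNorm_fderiv_one μ (hf.norm_sq ℝ) hu hp
    _ ≤ eLpNormLESNormFDerivOneConst μ p * (2 * eLpNorm f q μ * eLpNorm (fderiv ℝ f) r μ) := by
        gcongr
        rw [funext hderiv]
        exact eLpNorm_le_eLpNorm_mul_eLpNorm_of_nnnorm hf.continuous.aestronglyMeasurable
          hDf.aestronglyMeasurable (fun y L ↦ 2 • (innerSL ℝ y).comp L) 2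
          (.of_forall hbound)
    _ = 2 * eLpNormLESNormFDerivOneConst μ p * (eLpNorm f q μ * eLpNorm (fderiv ℝ f) r μ) := by
        ring

theorem integral_sq_norm_fderiv_apply_eq (hf : ContDiff ℝ 2 f) (hfc : HasCompactSupport f)
    (v : E) :
    ∫ x, ‖fderiv ℝ f x v‖ ^ 2 ∂μ = -∫ x, inner ℝ (fderiv ℝ (fderiv ℝ f) x v v) (f x) ∂μ := by
  have hDf : ContDiff ℝ 1 (fderiv ℝ f) := hf.fderiv_right (by norm_num)
  have hg : ContDiff ℝ 1 (fun x ↦ fderiv ℝ f x v) := hDf.clm_apply contDiff_const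
  have hgc : HasCompactSupport (fun x ↦ fderiv ℝ f x v) := hfc.fderiv_apply ℝ v
  have hg' (x : E) : fderiv ℝ (fun y ↦ fderiv ℝ f y v) x v = fderiv ℝ (fderiv ℝ f) x v v := by
    rw [fderiv_clm_apply (hDf.differentiable one_ne_zero x) (by fun_prop)]
    simp
  have hg'cont : Continuous (fun x ↦ fderiv ℝ (fun y ↦ fderiv ℝ f y v) x v) :=
    (hg.continuous_fderiv one_ne_zero).clm_apply continuous_const
  have hparts := integral_bilinear_fderiv_right_eq_neg_left_of_integrable (μ := μ) (v := v)
    (f := fun x ↦ fderiv ℝ f x v) (g := f) (B := innerSL ℝ)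
    ((hg'cont.inner hf.continuous).integrable_of_hasCompactSupport
      (hfc.mono fun x hx h ↦ hx (by simp [h])))
    ((hg.continuous.inner hg.continuous).integrable_of_hasCompactSupport
      (hgc.mono fun x hx h ↦ hx (by simp [h])))
    ((hg.continuous.inner hf.continuous).integrable_of_hasCompactSupport
      (hfc.mono fun x hx h ↦ hx (by simp [h])))
    (fun x _ ↦ hg.differentiable one_ne_zero x) (fun x _ ↦ hf.differentiable two_ne_zero x)
  simpa only [innerSL_apply_apply ℝ, real_inner_self_eq_norm_sq, hg'] using hparts

theorem sq_eLpNorm_fderiv_apply_le (hf : ContDiff ℝ 2 f) (hfc : HasCompactSupport f) (v : E)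
    (p q : ℝ≥0∞) [p.HolderConjugate q] :
    eLpNorm (fun x ↦ fderiv ℝ f x v) 2 μ ^ 2 ≤
      ‖v‖ₑ ^ 2 * (eLpNorm (fderiv ℝ (fderiv ℝ f)) p μ * eLpNorm f q μ) := by
  have hDf : ContDiff ℝ 1 (fderiv ℝ f) := hf.fderiv_right (by norm_num)
  have hg : Continuous (fun x ↦ fderiv ℝ f x v) := hDf.continuous.clm_apply continuous_const
  have hint : Integrable (fun x ↦ ‖fderiv ℝ f x v‖ ^ 2) μ :=
    (hg.memLp_of_hasCompactSupport (hfc.fderiv_apply ℝ v)).integrable_norm_pow two_ne_zero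
  have hbound (B : E →L[ℝ] E →L[ℝ] F) (y : F) :
      ‖(inner ℝ (B v v) y : ℝ)‖₊ ≤ ‖v‖₊ ^ 2 * ‖B‖₊ * ‖y‖₊ := by
    refine (nnnorm_inner_le_nnnorm _ _).trans (mul_le_mul_left ?_ _)
    calc ‖B v v‖₊ ≤ ‖B‖₊ * ‖v‖₊ * ‖v‖₊ := B.le_opNorm₂ v v
      _ = ‖v‖₊ ^ 2 * ‖B‖₊ := by ring
  calc eLpNorm (fun x ↦ fderiv ℝ f x v) 2 μ ^ 2
      = ENNReal.ofReal (∫ x, ‖fderiv ℝ f x v‖ ^ 2 ∂μ) := by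
        rw [sq_eLpNorm_two_eq_lintegral, ofReal_integral_eq_lintegral_ofReal hint
          (.of_forall fun _ ↦ sq_nonneg _)]
        simp only [ENNReal.ofReal_pow (norm_nonneg _), ofReal_norm]
    _ ≤ ‖∫ x, inner ℝ (fderiv ℝ (fderiv ℝ f) x v v) (f x) ∂μ‖ₑ := by
        rw [integral_sq_norm_fderiv_apply_eq μ hf hfc, ← enorm_neg]
        exact Real.ofReal_le_enorm _
    _ ≤ eLpNorm (fun x ↦ (inner ℝ (fderiv ℝ (fderiv ℝ f) x v v) (f x) : ℝ)) 1 μ := by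
        rw [eLpNorm_one_eq_lintegral_enorm]
        exact enorm_integral_le_lintegral_enorm _
    _ ≤ (‖v‖₊ ^ 2 : ℝ≥0) * eLpNorm (fderiv ℝ (fderiv ℝ f)) p μ * eLpNorm f q μ :=
        eLpNorm_le_eLpNorm_mul_eLpNorm_of_nnnorm
          (hDf.continuous_fderiv one_ne_zero).aestronglyMeasurable
          hf.continuous.aestronglyMeasurable (fun B y ↦ inner ℝ (B v v) y) _
          (.of_forall fun _ ↦ hbound _ _)
    _ = ‖v‖ₑ ^ 2 * (eLpNorm (fderiv ℝ (fderiv ℝ f)) p μ * eLpNorm f q μ) := by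
        rw [mul_assoc, ENNReal.coe_pow, enorm_eq_nnnorm]

theorem exists_sq_eLpNorm_fderiv_le (p q : ℝ≥0∞) [p.HolderConjugate q] :
    ∃ C : ℝ≥0, ∀ f : E → F, ContDiff ℝ 2 f → HasCompactSupport f →
      eLpNorm (fderiv ℝ f) 2 μ ^ 2 ≤
        C * (eLpNorm (fderiv ℝ (fderiv ℝ f)) p μ * eLpNorm f q μ) := by
  let v := Module.finBasis ℝ E
  obtain ⟨C, hC⟩ := exists_sq_enorm_le_mul_sum_sq_enorm_apply_basis (F := F) v
  refine ⟨C * ∑ i, ‖v i‖₊ ^ 2, fun f hf hfc ↦ ?_⟩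
  have hmeas (i) : Measurable fun x ↦ ‖fderiv ℝ f x (v i)‖ₑ ^ 2 :=
    ((hf.continuous_fderiv two_ne_zero).clm_apply continuous_const).enorm.measurable.pow_const 2
  calc eLpNorm (fderiv ℝ f) 2 μ ^ 2
      ≤ ∫⁻ x, C * ∑ i, ‖fderiv ℝ f x (v i)‖ₑ ^ 2 ∂μ := by
        rw [sq_eLpNorm_two_eq_lintegral]
        exact lintegral_mono fun x ↦ hC _
    _ = C * ∑ i, eLpNorm (fun x ↦ fderiv ℝ f x (v i)) 2 μ ^ 2 := by
        rw [lintegral_const_mul' _ _ ENNReal.coe_ne_top, lintegral_finsetSum _ fun i _ ↦ hmeas i]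
        simp only [sq_eLpNorm_two_eq_lintegral]
    _ ≤ C * ∑ i, ‖v i‖ₑ ^ 2 * (eLpNorm (fderiv ℝ (fderiv ℝ f)) p μ * eLpNorm f q μ) := by
        gcongr with i
        exact sq_eLpNorm_fderiv_apply_le μ hf hfc (v i) p q
    _ = ↑(C * ∑ i, ‖v i‖₊ ^ 2) * (eLpNorm (fderiv ℝ (fderiv ℝ f)) p μ * eLpNorm f q μ) := by
        simp only [← Finset.sum_mul, ← mul_assoc, enorm_eq_nnnorm]
        push_cast
        rfl

theorem exists_sq_eLpNorm_four_le (hE : finrank ℝ E = 2) :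
    ∃ C : ℝ≥0, ∀ f : E → F, ContDiff ℝ 2 f → HasCompactSupport f →
      eLpNorm f 4 μ ^ 2 ≤ C * (eLpNorm f 1 μ * eLpNorm (iteratedFDeriv ℝ 2 f) 2 μ) := by
  have hE2 : NNReal.HolderConjugate (finrank ℝ E) 2 := by
    rw [hE]
    exact NNReal.HolderConjugate.two_two
  obtain ⟨M, hM⟩ := exists_sq_eLpNorm_fderiv_le (F := F) μ 2 2
  generalize hK : 2 * eLpNormLESNormFDerivOneConst μ (2 : ℝ≥0) = K
  refine ⟨K ^ 2 * M, fun f hf hfc ↦ ?_⟩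
  rw [← eLpNorm_congr_enorm_ae (.of_forall (enorm_fderiv_fderiv f))]
  have hsobolev : eLpNorm f 4 μ ^ 2 ≤ K * (eLpNorm f 2 μ * eLpNorm (fderiv ℝ f) 2 μ) := by
    have h := sq_eLpNorm_two_mul_le μ (hf.of_le one_le_two) hfc hE2 2 2
    rwa [show (2 * (2 : ℝ≥0) : ℝ≥0∞) = 4 by norm_num, ← ENNReal.coe_two, ← ENNReal.coe_mul,
      hK] at h
  have hparts := hM f hf hfc
  have hinterp := eLpNorm_two_pow_three_le (μ := μ) (f := f) hf.continuous.aestronglyMeasurable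
  have hfin : eLpNorm f 4 μ ≠ ∞ :=
    (hf.continuous.memLp_of_hasCompactSupport (p := 4) (μ := μ) hfc).eLpNorm_ne_top
  rcases eq_or_ne (eLpNorm f 4 μ) 0 with hzero | hzero
  · simp [hzero]
  generalize eLpNorm (fderiv ℝ (fderiv ℝ f)) 2 μ = H at *
  refine (ENNReal.mul_le_mul_iff_right (pow_ne_zero 2 hzero) (ENNReal.pow_ne_top hfin)).1 ?_
  calc eLpNorm f 4 μ ^ 2 * eLpNorm f 4 μ ^ 2
      ≤ (K * (eLpNorm f 2 μ * eLpNorm (fderiv ℝ f) 2 μ)) ^ 2 := by rw [← sq]; gcongr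
    _ = K ^ 2 * eLpNorm f 2 μ ^ 2 * eLpNorm (fderiv ℝ f) 2 μ ^ 2 := by ring
    _ ≤ K ^ 2 * eLpNorm f 2 μ ^ 2 * (M * (H * eLpNorm f 2 μ)) := by gcongr
    _ = K ^ 2 * M * H * eLpNorm f 2 μ ^ 3 := by ring
    _ ≤ K ^ 2 * M * H * (eLpNorm f 1 μ * eLpNorm f 4 μ ^ 2) := by gcongr
    _ = eLpNorm f 4 μ ^ 2 * (↑(K ^ 2 * M) * (eLpNorm f 1 μ * H)) := by push_cast; ring

theorem exists_lpNorm_four_le (hE : finrank ℝ E = 2) :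
    ∃ C : ℝ, 0 < C ∧ ∀ f : E → F, ContDiff ℝ 2 f → HasCompactSupport f →
      lpNorm f 4 μ ≤ C * √(lpNorm f 1 μ) * √(lpNorm (iteratedFDeriv ℝ 2 f) 2 μ) := by
  obtain ⟨C, hC⟩ := exists_sq_eLpNorm_four_le (F := F) μ hE
  refine ⟨√(C + 1), by positivity, fun f hf hfc ↦ ?_⟩
  have hD2 : Continuous (iteratedFDeriv ℝ 2 f) := hf.continuous_iteratedFDeriv le_rfl
  have hfin : C * (eLpNorm f 1 μ * eLpNorm (iteratedFDeriv ℝ 2 f) 2 μ) ≠ ∞ := by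
    have h₁ := (hf.continuous.memLp_of_hasCompactSupport (μ := μ) (p := 1) hfc).eLpNorm_ne_top
    have h₂ := (hD2.memLp_of_hasCompactSupport (μ := μ) (p := 2)
      (hfc.iteratedFDeriv 2)).eLpNorm_ne_top
    finiteness
  have hsq : lpNorm f 4 μ ^ 2 ≤ C * (lpNorm f 1 μ * lpNorm (iteratedFDeriv ℝ 2 f) 2 μ) := by
    simpa [toReal_eLpNorm, hf.continuous.aestronglyMeasurable, hD2.aestronglyMeasurable]
      using ENNReal.toReal_mono hfin (hC f hf hfc)
  have hnonneg : 0 ≤ lpNorm f 1 μ * lpNorm (iteratedFDeriv ℝ 2 f) 2 μ :=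
    mul_nonneg lpNorm_nonneg lpNorm_nonneg
  calc lpNorm f 4 μ
      ≤ √((C + 1) * (lpNorm f 1 μ * lpNorm (iteratedFDeriv ℝ 2 f) 2 μ)) :=
        Real.le_sqrt_of_sq_le (by linarith)
    _ = √(C + 1) * √(lpNorm f 1 μ) * √(lpNorm (iteratedFDeriv ℝ 2 f) 2 μ) := by
        rw [Real.sqrt_mul (by positivity), Real.sqrt_mul lpNorm_nonneg, mul_assoc]

theorem gagliardo_nirenberg_L4_L1_Hessian_general (hE : finrank ℝ E = 2) :
    ∃ C : ℝ, 0 < C ∧ ∀ f : E → F, ContDiff ℝ 2 f → HasCompactSupport f →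
      (∫ x, ‖f x‖ ^ (4 : ℝ) ∂μ) ^ ((1 : ℝ) / 4)
        ≤ C * (∫ x, ‖f x‖ ∂μ) ^ ((1 : ℝ) / 2)
            * (∫ x, ‖iteratedFDeriv ℝ 2 f x‖ ^ (2 : ℝ) ∂μ) ^ ((1 : ℝ) / 4) := by
  obtain ⟨C, hC, h⟩ := exists_lpNorm_four_le (F := F) μ hE
  refine ⟨C, hC, fun f hf hfc ↦ ?_⟩
  have hfm := hf.continuous.aestronglyMeasurable (μ := μ)
  have hD2m := (hf.continuous_iteratedFDeriv le_rfl).aestronglyMeasurable (μ := μ)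
  have hfour : lpNorm f 4 μ = (∫ x, ‖f x‖ ^ (4 : ℝ) ∂μ) ^ ((1 : ℝ) / 4) := by
    simp [lpNorm_eq_integral_norm_rpow_toReal, hfm]
  have hhess : √(lpNorm (iteratedFDeriv ℝ 2 f) 2 μ)
      = (∫ x, ‖iteratedFDeriv ℝ 2 f x‖ ^ (2 : ℝ) ∂μ) ^ ((1 : ℝ) / 4) := by
    rw [lpNorm_eq_integral_norm_rpow_toReal two_ne_zero ENNReal.ofNat_ne_top hD2m,
      Real.sqrt_eq_rpow, ← Real.rpow_mul (by positivity)]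
    norm_num
  simpa only [hfour, hhess, lpNorm_one_eq_integral_norm hfm, Real.sqrt_eq_rpow] using h f hf hfc

end Derivatives

/-- Gagliardo–Nirenberg in `ℝ²`: `‖f‖_{L⁴} ≤ C ‖f‖_{L¹}^{1/2} ‖∇²f‖_{L²}^{1/2}`. -/
theorem gagliardo_nirenberg_L4_L1_Hessian :
    ∃ C : ℝ, 0 < C ∧ ∀ (f : ℝ × ℝ → ℝ), ContDiff ℝ (⊤ : ℕ∞) f → HasCompactSupport f →
      (∫ x, |f x| ^ (4:ℝ)) ^ ((1:ℝ)/4)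
        ≤ C * (∫ x, |f x|) ^ ((1:ℝ)/2)
            * (∫ x, ‖iteratedFDeriv ℝ 2 f x‖ ^ (2:ℝ)) ^ ((1:ℝ)/4) := by
  obtain ⟨C, hC, h⟩ := gagliardo_nirenberg_L4_L1_Hessian_general (F := ℝ)
    (volume : Measure (ℝ × ℝ)) (by simp)
  exact ⟨C, hC, fun f hf ↦ h f (contDiff_infty.1 hf 2)⟩
end

section
/- Let f : ℝ² → ℝ² be a C¹ vector field with ∫_{|x|>r₀} |∇f|² dx < ∞ for some r₀ > 0. Then there exists an increasing sequence (r_n) with r_n ∈ (2^n, 2^{n+1}) such that lim_{n→∞} sup_{θ ∈ [0,2π]} |f(r_n,θ)|² / ln r_n = 0. -/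
open MeasureTheory Real Filter Set

/-! In polar coordinates the energy is `∫ D(s) ds`, where `D(s)` is the energy carried by the circle
of radius `s`. Joining `(r, θ)` to `(R, φ)` along the circle of radius `r` and then along a ray, and
averaging over `φ`, Cauchy–Schwarz gives
`|f(r, θ)| ≤ sup |f(R, ·)| + √(2π r D(r)) + √(log (r / R) * ∫_R^r D / (2π))`.
Since `∫ D < ∞`, every dyadic interval contains a radius at which `r D(r)` is at most twice the
energy of its annulus, and along these radii only the last term can grow; by choosing `R` large it
becomes an arbitrarily small multiple of `√(log r)`. -/

section CauchySchwarz

variable {α : Type*} [MeasurableSpace α] {μ : Measure α} {u v : α → ℝ}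

lemma memLp_two_sqrt (hu : Integrable u μ) : MemLp (fun x => √(u x)) 2 μ := by
  rw [memLp_two_iff_integrable_sq
    (continuous_sqrt.comp_aestronglyMeasurable hu.aestronglyMeasurable)]
  simpa only [sq_sqrt'] using hu.pos_part

lemma integrable_sqrt_mul (hu : Integrable u μ) (hv : Integrable v μ) (hu0 : 0 ≤ᵐ[μ] u) :
    Integrable (fun x => √(u x * v x)) μ :=
  ((memLp_two_sqrt hu).integrable_mul (memLp_two_sqrt hv)).congr <|
    hu0.mono fun _ hx => (sqrt_mul hx _).symm

lemma integral_sqrt_mul_le_sqrt_mul_integral (hu : Integrable u μ) (hv : Integrable v μ)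
    (hu0 : 0 ≤ᵐ[μ] u) (hv0 : 0 ≤ᵐ[μ] v) :
    ∫ x, √(u x * v x) ∂μ ≤ √((∫ x, u x ∂μ) * ∫ x, v x ∂μ) := by
  have integral_sqrt_rpow {w : α → ℝ} (hw0 : 0 ≤ᵐ[μ] w) :
      ∫ x, √(w x) ^ (2 : ℝ) ∂μ = ∫ x, w x ∂μ :=
    integral_congr_ae <| hw0.mono fun x hx => by simp only [rpow_two, sq_sqrt hx]
  calc ∫ x, √(u x * v x) ∂μ = ∫ x, √(u x) * √(v x) ∂μ :=
        integral_congr_ae <| hu0.mono fun x hx => sqrt_mul hx _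
    _ ≤ (∫ x, √(u x) ^ (2 : ℝ) ∂μ) ^ (1 / 2 : ℝ) * (∫ x, √(v x) ^ (2 : ℝ) ∂μ) ^ (1 / 2 : ℝ) :=
        integral_mul_le_Lp_mul_Lq_of_nonneg .two_two (ae_of_all _ fun _ => sqrt_nonneg _)
          (ae_of_all _ fun _ => sqrt_nonneg _) (by simpa using memLp_two_sqrt hu)
          (by simpa using memLp_two_sqrt hv)
    _ = √((∫ x, u x ∂μ) * ∫ x, v x ∂μ) := by
        rw [integral_sqrt_rpow hu0, integral_sqrt_rpow hv0, ← sqrt_eq_rpow, ← sqrt_eq_rpow,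
          sqrt_mul (integral_nonneg_of_ae hu0)]

end CauchySchwarz

lemma exists_mem_Ioo_mul_le_two_mul_setIntegral {g : ℝ → ℝ} {a : ℝ} (ha : 0 < a)
    (hg : IntegrableOn g (Ioo a (2 * a))) (hg0 : ∀ s ∈ Ioo a (2 * a), 0 ≤ g s) :
    ∃ s ∈ Ioo a (2 * a), s * g s ≤ 2 * ∫ t in Ioo a (2 * a), g t := by
  have hvol : volume.real (Ioo a (2 * a)) = a := by
    rw [volume_real_Ioo_of_le (by linarith)]
    ring
  obtain ⟨s, hs, hle⟩ := exists_le_setAverage (μ := volume) (by simp [ha]) (by simp) hg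
  refine ⟨s, hs, ?_⟩
  rw [setAverage_eq, hvol, smul_eq_mul] at hle
  calc s * g s ≤ 2 * a * (a⁻¹ * ∫ t in Ioo a (2 * a), g t) := by
        gcongr
        · exact hg0 s hs
        · exact hs.2.le
    _ = 2 * ∫ t in Ioo a (2 * a), g t := by field_simp

lemma tendsto_biSup_div_zero {ι β : Type*} {l : Filter ι} {t : Set β} {u : ι → β → ℝ}
    {v : ι → ℝ} (hu : ∀ i x, 0 ≤ u i x) (hv : ∀ᶠ i in l, 0 < v i)
    (huv : ∀ ε > 0, ∀ᶠ i in l, ∀ x ∈ t, u i x ≤ ε * v i) :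
    Tendsto (fun i => (⨆ x ∈ t, u i x) / v i) l (nhds 0) := by
  rw [Metric.tendsto_nhds]
  intro ε hε
  filter_upwards [hv, huv (ε / 2) (half_pos hε)] with i hvi hi
  have hsup_nonneg : 0 ≤ ⨆ x ∈ t, u i x :=
    Real.iSup_nonneg fun x => Real.iSup_nonneg fun _ => hu i x
  have hsup_le : ⨆ x ∈ t, u i x ≤ ε / 2 * v i :=
    Real.iSup_le (fun x => Real.iSup_le (hi x) (by positivity)) (by positivity)
  rw [Real.dist_eq, sub_zero, abs_of_nonneg (by positivity), div_lt_iff₀ hvi]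
  exact hsup_le.trans_lt (mul_lt_mul_of_pos_right (half_lt_self hε) hvi)

section Polar

lemma abs_fst_le_two_mul_norm_polarCoord_symm (p : ℝ × ℝ) :
    |p.1| ≤ 2 * ‖polarCoord.symm p‖ := by
  have hcos : |p.1 * cos p.2| ≤ ‖polarCoord.symm p‖ := norm_fst_le (polarCoord.symm p)
  have hsin : |p.1 * sin p.2| ≤ ‖polarCoord.symm p‖ := norm_snd_le (polarCoord.symm p)
  have hsq : cos p.2 ^ 2 + sin p.2 ^ 2 = 1 := cos_sq_add_sin_sq p.2
  have hone : 1 ≤ |cos p.2| + |sin p.2| := by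
    nlinarith [sq_abs (cos p.2), sq_abs (sin p.2), abs_nonneg (cos p.2), abs_nonneg (sin p.2),
      abs_cos_le_one p.2, abs_sin_le_one p.2]
  rw [abs_mul] at hcos hsin
  nlinarith [mul_le_mul_of_nonneg_left hone (abs_nonneg p.1)]

lemma lt_norm_polarCoord_symm {ρ s : ℝ} (hs : 2 * |ρ| < s) (φ : ℝ) :
    ρ < ‖polarCoord.symm (s, φ)‖ := by
  linarith [abs_fst_le_two_mul_norm_polarCoord_symm (s, φ), le_abs_self s, le_abs_self ρ]

lemma periodic_polarCoord_symm (s : ℝ) :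
    Function.Periodic (fun φ => polarCoord.symm (s, φ)) (2 * π) := fun φ => by
  simp only [polarCoord_symm_apply, cos_add_two_pi, sin_add_two_pi]

lemma hasDerivAt_polarCoord_symm_radial (s φ : ℝ) :
    HasDerivAt (fun t => polarCoord.symm (t, φ)) (cos φ, sin φ) s :=
  .prodMk (hasDerivAt_mul_const (cos φ)) (hasDerivAt_mul_const (sin φ))

lemma hasDerivAt_polarCoord_symm_angular (s φ : ℝ) :
    HasDerivAt (fun ψ => polarCoord.symm (s, ψ)) (s * -sin φ, s * cos φ) φ :=
  .prodMk ((hasDerivAt_cos φ).const_mul s) ((hasDerivAt_sin φ).const_mul s)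

variable {E : Type*} [NormedAddCommGroup E] [NormedSpace ℝ E] {f : ℝ × ℝ → E}

/-- The operator norm `|∇f|` of the derivative at the point with polar coordinates
`p = (s, φ)`. -/
noncomputable def polarGradNorm (f : ℝ × ℝ → E) (p : ℝ × ℝ) : ℝ :=
  ‖fderiv ℝ f (polarCoord.symm p)‖

/-- The Dirichlet energy `∫ |∇f|²` of `f` along the circle of radius `s`, with respect to arc
length; integrating it over `s` yields the energy on annuli. -/
noncomputable def circleEnergy (f : ℝ × ℝ → E) (s : ℝ) : ℝ :=
  s * ∫ φ in (-π)..π, polarGradNorm f (s, φ) ^ 2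

lemma polarGradNorm_nonneg (p : ℝ × ℝ) : 0 ≤ polarGradNorm f p := norm_nonneg _

lemma circleEnergy_nonneg {s : ℝ} (hs : 0 ≤ s) : 0 ≤ circleEnergy f s :=
  mul_nonneg hs <| intervalIntegral.integral_nonneg (by linarith [pi_pos]) fun _ _ => sq_nonneg _

lemma contDiffAt_polarCoord_symm {ρ s : ℝ} (hf : ContDiffOn ℝ 1 f {x | ρ < ‖x‖})
    (hs : 2 * |ρ| < s) (φ : ℝ) : ContDiffAt ℝ 1 f (polarCoord.symm (s, φ)) :=
  hf.contDiffAt <|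
    (isOpen_lt continuous_const continuous_norm).mem_nhds (lt_norm_polarCoord_symm hs φ)

lemma continuousAt_polarGradNorm {p : ℝ × ℝ} (hf : ContDiffAt ℝ 1 f (polarCoord.symm p)) :
    ContinuousAt (polarGradNorm f) p :=
  ((hf.continuousAt_fderiv one_ne_zero).comp continuous_polarCoord_symm.continuousAt).norm

lemma continuous_polarGradNorm_angular {s : ℝ}
    (hf : ∀ φ, ContDiffAt ℝ 1 f (polarCoord.symm (s, φ))) :
    Continuous fun φ => polarGradNorm f (s, φ) :=
  continuous_iff_continuousAt.2 fun φ =>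
    (continuousAt_polarGradNorm (hf φ)).comp (f := fun ψ => (s, ψ)) (by fun_prop)

lemma continuousOn_polarGradNorm_radial {a b φ : ℝ}
    (hf : ∀ s ∈ Icc a b, ContDiffAt ℝ 1 f (polarCoord.symm (s, φ))) :
    ContinuousOn (fun s => polarGradNorm f (s, φ)) (Icc a b) := fun s hs =>
  ((continuousAt_polarGradNorm (hf s hs)).comp (f := fun t => (t, φ))
    (by fun_prop)).continuousWithinAt

lemma integrableOn_polarGradNorm {a b α β : ℝ}
    (hf : ∀ s ∈ Icc a b, ∀ φ, ContDiffAt ℝ 1 f (polarCoord.symm (s, φ))) :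
    IntegrableOn (polarGradNorm f) (Ioc a b ×ˢ Ioc α β) := by
  have hcont : ContinuousOn (polarGradNorm f) (Icc a b ×ˢ Icc α β) := fun p hp =>
    (continuousAt_polarGradNorm (hf p.1 hp.1 p.2)).continuousWithinAt
  exact (hcont.integrableOn_compact (isCompact_Icc.prod isCompact_Icc)).mono_set
    (prod_mono Ioc_subset_Icc_self Ioc_subset_Icc_self)

lemma integrableOn_circleEnergy {ρ : ℝ}
    (hD : IntegrableOn (fun x => ‖fderiv ℝ f x‖ ^ 2) {x : ℝ × ℝ | ρ < ‖x‖}) :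
    IntegrableOn (circleEnergy f) (Ioi (2 * |ρ|)) := by
  have hsub : Ioi (2 * |ρ|) ×ˢ Ioo (-π) π ⊆ polarCoord.target :=
    prod_mono (Ioi_subset_Ioi (by positivity)) subset_rfl
  have himage : polarCoord.symm '' (Ioi (2 * |ρ|) ×ˢ Ioo (-π) π) ⊆ {x : ℝ × ℝ | ρ < ‖x‖} := by
    rintro _ ⟨⟨s, φ⟩, ⟨hs, -⟩, rfl⟩
    exact lt_norm_polarCoord_symm hs φ
  have hpolar := (integrableOn_image_iff_integrableOn_abs_det_fderiv_smul volume
    (measurableSet_Ioi.prod measurableSet_Ioo)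
    (fun p _ => (hasFDerivAt_polarCoord_symm p).hasFDerivWithinAt)
    (polarCoord.symm.injOn.mono hsub) _).1 (hD.mono_set himage)
  rw [IntegrableOn, Measure.volume_eq_prod, ← Measure.prod_restrict] at hpolar
  refine hpolar.integral_prod_left.congr ?_
  filter_upwards [ae_restrict_mem measurableSet_Ioi] with s hs
  have hs0 : 0 < s := lt_of_le_of_lt (by positivity) hs
  rw [circleEnergy, intervalIntegral.integral_of_le (by linarith [pi_pos]),
    integral_Ioc_eq_integral_Ioo, ← integral_const_mul]
  simp only [det_fderivPolarCoordSymm, abs_of_pos hs0, smul_eq_mul, polarGradNorm]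

lemma norm_sub_le_integral_polarGradNorm_radial {a b φ : ℝ} (hab : a ≤ b)
    (hf : ∀ s ∈ Icc a b, ContDiffAt ℝ 1 f (polarCoord.symm (s, φ))) :
    ‖f (polarCoord.symm (b, φ)) - f (polarCoord.symm (a, φ))‖
      ≤ ∫ s in a..b, polarGradNorm f (s, φ) := by
  have hderiv (s : ℝ) (hs : s ∈ Icc a b) : HasDerivAt (fun t => f (polarCoord.symm (t, φ)))
      (fderiv ℝ f (polarCoord.symm (s, φ)) (cos φ, sin φ)) s :=
    ((hf s hs).differentiableAt one_ne_zero).hasFDerivAt.comp_hasDerivAt s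
      (hasDerivAt_polarCoord_symm_radial s φ)
  refine norm_sub_le_integral_of_norm_deriv_le_of_le (f := fun s => f (polarCoord.symm (s, φ))) hab
    (fun s hs => (hderiv s hs).continuousAt.continuousWithinAt)
    (fun s hs => (hderiv s (Ioo_subset_Icc_self hs)).differentiableAt.differentiableWithinAt)
    (ae_of_all _ fun s hs => ?_)
    ((continuousOn_polarGradNorm_radial hf).intervalIntegrable_of_Icc hab)
  rw [(hderiv s (Ioo_subset_Icc_self hs)).deriv]
  have hdir : ‖(cos φ, sin φ)‖ ≤ 1 := max_le (abs_cos_le_one φ) (abs_sin_le_one φ)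
  exact (fderiv ℝ f (polarCoord.symm (s, φ))).unit_le_opNorm _ hdir

lemma norm_sub_le_mul_integral_polarGradNorm_angular {s α β : ℝ} (hs : 0 ≤ s) (hαβ : α ≤ β)
    (hf : ∀ φ, ContDiffAt ℝ 1 f (polarCoord.symm (s, φ))) :
    ‖f (polarCoord.symm (s, β)) - f (polarCoord.symm (s, α))‖
      ≤ s * ∫ φ in α..β, polarGradNorm f (s, φ) := by
  have hderiv (φ : ℝ) : HasDerivAt (fun ψ => f (polarCoord.symm (s, ψ)))
      (fderiv ℝ f (polarCoord.symm (s, φ)) (s * -sin φ, s * cos φ)) φ :=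
    ((hf φ).differentiableAt one_ne_zero).hasFDerivAt.comp_hasDerivAt φ
      (hasDerivAt_polarCoord_symm_angular s φ)
  have hspeed (φ : ℝ) : ‖(s * -sin φ, s * cos φ)‖ ≤ s := by
    rw [Prod.norm_mk, norm_mul, norm_mul, norm_neg, norm_of_nonneg hs]
    exact max_le (mul_le_of_le_one_right hs (abs_sin_le_one φ))
      (mul_le_of_le_one_right hs (abs_cos_le_one φ))
  rw [← intervalIntegral.integral_const_mul]
  refine norm_sub_le_integral_of_norm_deriv_le_of_le (f := fun φ => f (polarCoord.symm (s, φ))) hαβ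
    (fun φ _ => (hderiv φ).continuousAt.continuousWithinAt)
    (fun φ _ => (hderiv φ).differentiableAt.differentiableWithinAt)
    (ae_of_all _ fun φ _ => ?_)
    ((continuous_const.mul (continuous_polarGradNorm_angular hf)).intervalIntegrable _ _)
  rw [(hderiv φ).deriv]
  exact ((fderiv ℝ f (polarCoord.symm (s, φ))).le_opNorm_of_le (hspeed φ)).trans_eq (mul_comm _ _)

lemma norm_sub_le_mul_integral_polarGradNorm_circle {s α β : ℝ} (hs : 0 ≤ s)
    (hα : α ∈ Icc (-π) π) (hβ : β ∈ Icc (-π) π)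
    (hf : ∀ φ, ContDiffAt ℝ 1 f (polarCoord.symm (s, φ))) :
    ‖f (polarCoord.symm (s, β)) - f (polarCoord.symm (s, α))‖
      ≤ s * ∫ φ in (-π)..π, polarGradNorm f (s, φ) := by
  wlog hαβ : α ≤ β generalizing α β
  · rw [norm_sub_rev]
    exact this hβ hα (le_of_not_ge hαβ)
  refine (norm_sub_le_mul_integral_polarGradNorm_angular hs hαβ hf).trans ?_
  gcongr
  exact intervalIntegral.integral_mono_interval hα.1 hαβ hβ.2
    (ae_of_all _ fun φ => polarGradNorm_nonneg _)
    ((continuous_polarGradNorm_angular hf).intervalIntegrable _ _)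

lemma integral_polarGradNorm_le_sqrt_circleEnergy {s : ℝ} (hs : 0 < s)
    (hf : ∀ φ, ContDiffAt ℝ 1 f (polarCoord.symm (s, φ))) :
    ∫ φ in (-π)..π, polarGradNorm f (s, φ) ≤ √(2 * π * (s⁻¹ * circleEnergy f s)) := by
  have hπ : -π ≤ π := by linarith [pi_pos]
  have hsq := ((continuous_polarGradNorm_angular hf).pow 2).intervalIntegrable (-π) π (μ := volume)
  have hcauchy := integral_sqrt_mul_le_sqrt_mul_integral (u := fun _ => 1)
    (intervalIntegrable_const (μ := volume) (a := -π) (b := π)).1 hsq.1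
    (ae_of_all _ fun _ => zero_le_one) (ae_of_all _ fun _ => sq_nonneg _)
  simp only [← intervalIntegral.integral_of_le hπ, one_mul, Pi.pow_apply,
    sqrt_sq (polarGradNorm_nonneg _), intervalIntegral.integral_const,
    smul_eq_mul, mul_one, sub_neg_eq_add, ← two_mul] at hcauchy
  rwa [circleEnergy, inv_mul_cancel_left₀ hs.ne']

lemma intervalIntegrable_integral_polarGradNorm {R r : ℝ} (hRr : R ≤ r)
    (hf : ∀ s ∈ Icc R r, ∀ φ, ContDiffAt ℝ 1 f (polarCoord.symm (s, φ))) :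
    IntervalIntegrable (fun s => ∫ φ in (-π)..π, polarGradNorm f (s, φ)) volume R r := by
  have hG := integrableOn_polarGradNorm hf (α := -π) (β := π)
  rw [IntegrableOn, Measure.volume_eq_prod, ← Measure.prod_restrict] at hG
  rw [intervalIntegrable_iff_integrableOn_Ioc_of_le hRr]
  simpa only [IntegrableOn, intervalIntegral.integral_of_le (neg_le_self pi_pos.le)]
    using hG.integral_prod_left

lemma integral_integral_polarGradNorm_le {R r : ℝ} (hR : 0 < R) (hRr : R ≤ r)
    (hf : ∀ s ∈ Icc R r, ∀ φ, ContDiffAt ℝ 1 f (polarCoord.symm (s, φ)))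
    (hD : IntervalIntegrable (circleEnergy f) volume R r) :
    ∫ s in R..r, ∫ φ in (-π)..π, polarGradNorm f (s, φ)
      ≤ √(2 * π * log (r / R) * ∫ s in R..r, circleEnergy f s) := by
  have hpos {s : ℝ} (hs : s ∈ Ioc R r) : 0 < s := hR.trans hs.1
  have hinv : IntervalIntegrable (fun s : ℝ => 2 * π * s⁻¹) volume R r :=
    (intervalIntegrable_inv_iff.2 <| .inr <|
      notMem_uIcc_of_lt hR (hR.trans_le hRr)).const_mul _
  have hinv_nonneg : 0 ≤ᵐ[volume.restrict (Ioc R r)] fun s => 2 * π * s⁻¹ :=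
    ae_restrict_of_forall_mem measurableSet_Ioc fun s hs => by have := hpos hs; positivity
  calc ∫ s in R..r, ∫ φ in (-π)..π, polarGradNorm f (s, φ)
      ≤ ∫ s in R..r, √(2 * π * s⁻¹ * circleEnergy f s) := by
        refine intervalIntegral.integral_mono_on hRr
          (intervalIntegrable_integral_polarGradNorm hRr hf)
          ((intervalIntegrable_iff_integrableOn_Ioc_of_le hRr).2
            (integrable_sqrt_mul hinv.1 hD.1 hinv_nonneg)) fun s hs => ?_
        rw [mul_assoc]
        exact integral_polarGradNorm_le_sqrt_circleEnergy (hR.trans_le hs.1) (hf s hs)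
    _ ≤ √((∫ s in R..r, 2 * π * s⁻¹) * ∫ s in R..r, circleEnergy f s) := by
        simp only [intervalIntegral.integral_of_le hRr]
        exact integral_sqrt_mul_le_sqrt_mul_integral hinv.1 hD.1 hinv_nonneg <|
          ae_restrict_of_forall_mem measurableSet_Ioc fun s hs => circleEnergy_nonneg (hpos hs).le
    _ = √(2 * π * log (r / R) * ∫ s in R..r, circleEnergy f s) := by
        rw [intervalIntegral.integral_const_mul, integral_inv_of_pos hR (hR.trans_le hRr)]

lemma norm_polar_le_add_integral_radial {R r K : ℝ} (hR : 0 ≤ R) (hRr : R ≤ r)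
    (hf : ∀ s ∈ Icc R r, ∀ φ, ContDiffAt ℝ 1 f (polarCoord.symm (s, φ)))
    (hK : ∀ φ ∈ Icc (-π) π, ‖f (polarCoord.symm (R, φ))‖ ≤ K) (θ : ℝ) {φ : ℝ}
    (hφ : φ ∈ Icc (-π) π) :
    ‖f (polarCoord.symm (r, θ))‖ ≤ K + r * (∫ ψ in (-π)..π, polarGradNorm f (r, ψ))
      + ∫ s in R..r, polarGradNorm f (s, φ) := by
  obtain ⟨θ', hθ', hθθ'⟩ := (periodic_polarCoord_symm r).exists_mem_Ioc two_pi_pos θ (-π)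
  rw [show -π + 2 * π = π by ring] at hθ'
  have hangular := norm_sub_le_mul_integral_polarGradNorm_circle (hR.trans hRr) hφ
    (Ioc_subset_Icc_self hθ') (hf r (right_mem_Icc.2 hRr))
  have hradial := norm_sub_le_integral_polarGradNorm_radial hRr fun s hs => hf s hs φ
  calc ‖f (polarCoord.symm (r, θ))‖ = ‖f (polarCoord.symm (r, θ'))‖ := by rw [hθθ']
    _ = ‖f (polarCoord.symm (R, φ))
          + (f (polarCoord.symm (r, θ')) - f (polarCoord.symm (r, φ)))
          + (f (polarCoord.symm (r, φ)) - f (polarCoord.symm (R, φ)))‖ := by congr 1; abel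
    _ ≤ _ := norm_add₃_le.trans (add_le_add_three (hK φ hφ) hangular hradial)

lemma norm_polar_le_add_average {R r K : ℝ} (hR : 0 ≤ R) (hRr : R ≤ r)
    (hf : ∀ s ∈ Icc R r, ∀ φ, ContDiffAt ℝ 1 f (polarCoord.symm (s, φ)))
    (hK : ∀ φ ∈ Icc (-π) π, ‖f (polarCoord.symm (R, φ))‖ ≤ K) (θ : ℝ) :
    ‖f (polarCoord.symm (r, θ))‖ ≤ K + r * (∫ φ in (-π)..π, polarGradNorm f (r, φ))
      + (2 * π)⁻¹ * ∫ s in R..r, ∫ φ in (-π)..π, polarGradNorm f (s, φ) := by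
  have hπ : -π ≤ π := neg_le_self pi_pos.le
  set M := K + r * ∫ φ in (-π)..π, polarGradNorm f (r, φ)
  have hG := integrableOn_polarGradNorm hf (α := -π) (β := π)
  have hradial :
      IntervalIntegrable (fun φ => ∫ s in R..r, polarGradNorm f (s, φ)) volume (-π) π := by
    rw [IntegrableOn, Measure.volume_eq_prod, ← Measure.prod_restrict] at hG
    rw [intervalIntegrable_iff_integrableOn_Ioc_of_le hπ]
    simpa only [IntegrableOn, intervalIntegral.integral_of_le hRr] using hG.integral_prod_right
  have hmean : ∫ _ in (-π)..π, ‖f (polarCoord.symm (r, θ))‖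
      ≤ ∫ φ in (-π)..π, (M + ∫ s in R..r, polarGradNorm f (s, φ)) :=
    intervalIntegral.integral_mono_on hπ intervalIntegrable_const
      (intervalIntegrable_const.add hradial)
      fun φ hφ => norm_polar_le_add_integral_radial hR hRr hf hK θ hφ
  rw [intervalIntegral.integral_add intervalIntegrable_const hradial,
    intervalIntegral.integral_const, intervalIntegral.integral_const, sub_neg_eq_add, ← two_mul,
    smul_eq_mul, smul_eq_mul, ← intervalIntegral_intervalIntegral_swap
      (by rwa [uIoc_of_le hRr, uIoc_of_le hπ])] at hmean
  rw [← mul_le_mul_iff_right₀ two_pi_pos, mul_add, mul_inv_cancel_left₀ two_pi_pos.ne']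
  exact hmean

lemma norm_polar_le {R r K : ℝ} (hR : 0 < R) (hRr : R ≤ r)
    (hf : ∀ s ∈ Icc R r, ∀ φ, ContDiffAt ℝ 1 f (polarCoord.symm (s, φ)))
    (hD : IntervalIntegrable (circleEnergy f) volume R r)
    (hK : ∀ φ ∈ Icc (-π) π, ‖f (polarCoord.symm (R, φ))‖ ≤ K) (θ : ℝ) :
    ‖f (polarCoord.symm (r, θ))‖ ≤ K + √(2 * π * (r * circleEnergy f r))
      + √(log (r / R) * (∫ s in R..r, circleEnergy f s) / (2 * π)) := by
  have hr : 0 < r := hR.trans_le hRr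
  refine (norm_polar_le_add_average hR.le hRr hf hK θ).trans ?_
  gcongr
  · calc r * ∫ φ in (-π)..π, polarGradNorm f (r, φ)
        ≤ r * √(2 * π * (r⁻¹ * circleEnergy f r)) := by
          gcongr
          exact integral_polarGradNorm_le_sqrt_circleEnergy hr (hf r (right_mem_Icc.2 hRr))
      _ = √(2 * π * (r * circleEnergy f r)) := by
          rw [← sqrt_sq hr.le, ← sqrt_mul (sq_nonneg r), sqrt_sq hr.le]
          congr 1
          field_simp
  · calc (2 * π)⁻¹ * ∫ s in R..r, ∫ φ in (-π)..π, polarGradNorm f (s, φ)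
        ≤ (2 * π)⁻¹ * √(2 * π * log (r / R) * ∫ s in R..r, circleEnergy f s) := by
          gcongr
          exact integral_integral_polarGradNorm_le hR hRr hf hD
      _ = √(log (r / R) * (∫ s in R..r, circleEnergy f s) / (2 * π)) := by
          rw [← sqrt_sq (inv_nonneg.2 two_pi_pos.le), ← sqrt_mul (sq_nonneg _)]
          congr 1
          field_simp

lemma intervalIntegral_circleEnergy_le {R a b : ℝ} (hR : 0 ≤ R)
    (hD : IntegrableOn (circleEnergy f) (Ioi R)) (hRa : R ≤ a) (hab : a ≤ b) :
    ∫ s in a..b, circleEnergy f s ≤ ∫ s in Ioi R, circleEnergy f s := by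
  rw [intervalIntegral.integral_of_le hab]
  exact setIntegral_mono_set hD
    (ae_restrict_of_forall_mem measurableSet_Ioi fun s hs => circleEnergy_nonneg (hR.trans hs.le))
    (LE.le.eventuallyLE fun s hs => hRa.trans_lt hs.1)

lemma exists_norm_circle_le {R : ℝ} (hf : ∀ φ, ContDiffAt ℝ 1 f (polarCoord.symm (R, φ))) :
    ∃ K, ∀ φ ∈ Icc (-π) π, ‖f (polarCoord.symm (R, φ))‖ ≤ K :=
  isCompact_Icc.exists_bound_of_continuousOn fun φ _ =>
    ((hf φ).continuousAt.comp (f := fun ψ => polarCoord.symm (R, ψ))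
      (by fun_prop)).continuousWithinAt

lemma eventually_norm_sq_polar_le {ρ : ℝ}
    (hf : ∀ s > ρ, ∀ φ, ContDiffAt ℝ 1 f (polarCoord.symm (s, φ)))
    (hD : IntegrableOn (circleEnergy f) (Ioi ρ)) (C : ℝ) {ε : ℝ} (hε : 0 < ε) :
    ∀ᶠ r in atTop, r * circleEnergy f r ≤ C →
      ∀ θ, ‖f (polarCoord.symm (r, θ))‖ ^ 2 ≤ ε * log r := by
  obtain ⟨R, hRρ, hR1, hRε⟩ : ∃ R, ρ < R ∧ 1 ≤ R ∧ ∫ s in Ioi R, circleEnergy f s ≤ ε :=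
    ((eventually_gt_atTop ρ).and ((eventually_ge_atTop 1).and
      ((tendsto_integral_Ioi_zero tendsto_id).eventually_le_const hε))).exists
  have hR0 : 0 < R := one_pos.trans_le hR1
  obtain ⟨K, hK⟩ := exists_norm_circle_le (hf R hRρ)
  have hsqrt : Tendsto (fun r => √(ε * log r)) atTop atTop :=
    tendsto_sqrt_atTop.comp (tendsto_log_atTop.const_mul_atTop hε)
  filter_upwards [eventually_ge_atTop R, hsqrt.eventually_ge_atTop (2 * (K + √(2 * π * C)))]
    with r hRr hr hC θ
  have hr0 : 0 < r := hR0.trans_le hRr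
  have hDR := hD.mono_set (Ioi_subset_Ioi hRρ.le)
  have hlog : 0 ≤ log r := log_nonneg (hR1.trans hRr)
  have htail : log (r / R) * (∫ s in R..r, circleEnergy f s) / (2 * π) ≤ ε * log r / 2 ^ 2 := by
    have hlog_le : log (r / R) ≤ log r :=
      log_le_log (div_pos hr0 hR0) (div_le_self hr0.le hR1)
    have henergy := (intervalIntegral_circleEnergy_le hR0.le hDR le_rfl hRr).trans hRε
    have henergy_nonneg : 0 ≤ ∫ s in R..r, circleEnergy f s :=
      intervalIntegral.integral_nonneg hRr fun s hs => circleEnergy_nonneg (hR0.le.trans hs.1)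
    rw [mul_comm ε]
    gcongr
    linarith [pi_gt_three]
  have hbound : ‖f (polarCoord.symm (r, θ))‖ ≤ √(ε * log r) :=
    calc ‖f (polarCoord.symm (r, θ))‖
        ≤ K + √(2 * π * (r * circleEnergy f r))
          + √(log (r / R) * (∫ s in R..r, circleEnergy f s) / (2 * π)) :=
          norm_polar_le hR0 hRr (fun s hs => hf s (hRρ.trans_le hs.1))
            ((intervalIntegrable_iff_integrableOn_Ioc_of_le hRr).2
              (hDR.mono_set Ioc_subset_Ioi_self)) hK θ
      _ ≤ K + √(2 * π * C) + √(ε * log r / 2 ^ 2) := by gcongr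
      _ ≤ √(ε * log r) := by
          rw [sqrt_div' _ (by positivity), sqrt_sq two_pos.le]
          linarith
  exact (le_sqrt (norm_nonneg _) (by positivity)).1 hbound

lemma exists_dyadic_radii_mul_circleEnergy_le {ρ : ℝ} (hρ : 0 ≤ ρ)
    (hD : IntegrableOn (circleEnergy f) (Ioi ρ)) :
    ∃ r : ℕ → ℝ, (∀ n, r n ∈ Ioo ((2 : ℝ) ^ n) (2 ^ (n + 1))) ∧
      ∀ᶠ n in atTop, r n * circleEnergy f (r n) ≤ 2 * ∫ s in Ioi ρ, circleEnergy f s := by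
  have hexists (n : ℕ) : ∃ s ∈ Ioo ((2 : ℝ) ^ n) (2 ^ (n + 1)),
      ρ ≤ 2 ^ n → s * circleEnergy f s ≤ 2 * ∫ s in Ioi ρ, circleEnergy f s := by
    have htwo : (0 : ℝ) < 2 ^ n := by positivity
    rw [pow_succ']
    by_cases hn : ρ ≤ 2 ^ n
    · obtain ⟨s, hs, hsD⟩ := exists_mem_Ioo_mul_le_two_mul_setIntegral htwo
        (hD.mono_set fun s hs => hn.trans_lt hs.1)
        fun s hs => circleEnergy_nonneg (htwo.trans hs.1).le
      rw [← integral_Ioc_eq_integral_Ioo,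
        ← intervalIntegral.integral_of_le (by linarith)] at hsD
      have henergy := intervalIntegral_circleEnergy_le hρ hD hn (b := 2 * 2 ^ n) (by linarith)
      exact ⟨s, hs, fun _ => by linarith⟩
    · obtain ⟨s, hs⟩ := exists_between (by linarith : (2 : ℝ) ^ n < 2 * 2 ^ n)
      exact ⟨s, hs, fun h => absurd h hn⟩
  choose r hr hrD using hexists
  exact ⟨r, hr, ((tendsto_pow_atTop_atTop_of_one_lt one_lt_two).eventually_ge_atTop ρ).mono hrD⟩

end Polar

theorem gilbarg_weinberger_sequence_decay_general {E : Type*} [NormedAddCommGroup E]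
    [NormedSpace ℝ E] {f : ℝ × ℝ → E} {r0 : ℝ} (hf : ContDiffOn ℝ 1 f {x | r0 < ‖x‖})
    (hD : IntegrableOn (fun x => ‖fderiv ℝ f x‖ ^ 2) {x : ℝ × ℝ | r0 < ‖x‖}) :
    ∃ r : ℕ → ℝ, StrictMono r ∧ (∀ n, r n ∈ Ioo ((2 : ℝ) ^ n) (2 ^ (n + 1))) ∧
      Tendsto (fun n =>
          (⨆ θ ∈ Icc (0 : ℝ) (2 * π), ‖f (r n * cos θ, r n * sin θ)‖ ^ 2) / log (r n))
        atTop (nhds 0) := by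
  have hρ : 0 ≤ 2 * |r0| := by positivity
  have henergy := integrableOn_circleEnergy hD
  obtain ⟨r, hr, hrC⟩ := exists_dyadic_radii_mul_circleEnergy_le hρ henergy
  have hr_mono : StrictMono r := strictMono_nat_of_lt_succ fun n => (hr n).2.trans (hr (n + 1)).1
  have hr_top : Tendsto r atTop atTop :=
    tendsto_atTop_mono (fun n => (hr n).1.le) (tendsto_pow_atTop_atTop_of_one_lt one_lt_two)
  have hlog (n : ℕ) : 0 < log (r n) := log_pos ((one_le_pow₀ one_le_two).trans_lt (hr n).1)
  refine ⟨r, hr_mono, hr, tendsto_biSup_div_zero (fun _ _ => sq_nonneg _) (.of_forall hlog)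
    fun ε hε => ?_⟩
  filter_upwards [hrC, hr_top.eventually (eventually_norm_sq_polar_le
    (fun _ => contDiffAt_polarCoord_symm hf) henergy _ hε)] with n hn hdecay θ _
  exact hdecay hn θ

/-- Gilbarg–Weinberger decay along a dyadic sequence of radii: uniform-in-angle decay
`|f(rₙ,θ)|² = o(ln rₙ)`. -/
theorem gilbarg_weinberger_sequence_decay (f : ℝ × ℝ → ℝ × ℝ) (hf : ContDiff ℝ 1 f)
    (r0 : ℝ) (hr0 : 0 < r0)
    (hD : IntegrableOn (fun x => ‖fderiv ℝ f x‖ ^ 2) {x : ℝ × ℝ | r0 < ‖x‖}) :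
    ∃ r : ℕ → ℝ, StrictMono r ∧ (∀ n, r n ∈ Ioo ((2:ℝ) ^ n) ((2:ℝ) ^ (n + 1))) ∧
      Tendsto (fun n =>
          (⨆ θ ∈ Icc (0:ℝ) (2 * π), ‖f (r n * Real.cos θ, r n * Real.sin θ)‖ ^ 2)
            / Real.log (r n))
        atTop (nhds 0) :=
  gilbarg_weinberger_sequence_decay_general hf.contDiffOn hD
end

section
/- Let Ω ⊂ ℝ² be the exterior of a ball and let f ∈ C¹(Ω) satisfy ∇f ∈ L²(Ω) ∩ L^p(Ω) for some 2 < p < ∞. Then lim_{|x|→∞} |f(x)| / √(ln |x|) = 0 uniformly. -/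
open MeasureTheory Real

/-!
Averaging the increments of `f` from the apex of a planar cone over the slopes bounds them by the
integral of `‖∇f‖ / distance` over the cone. Near the apex Hölder's inequality applies: the
conjugate exponent of `p > 2` is below `2`, so the kernel `1 / distance` is integrable to that
power. Away from the apex the Cauchy-Schwarz inequality costs `√(log T)`, where `T` is the height of
the cone, times the `L²` norm of `∇f` on a half plane, which is small when the half plane is far
out. A point `x` of the quadrant `|x₂| ≤ x₁` and a fixed apex `(a, 0)` are then compared through
their cones, both of which reach all of the segment `{3 x₁} × [-x₁, x₁]`; the isometries of the sup
norm carry the other quadrants to this one.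
-/

open Set Filter Bornology
open scoped ENNReal Topology

theorem setLIntegral_ofReal {h : ℝ → ℝ} {a b : ℝ} (hab : a ≤ b)
    (hh : IntervalIntegrable h volume a b) (h0 : ∀ s ∈ Ioc a b, 0 ≤ h s) :
    ∫⁻ s in Ioc a b, ENNReal.ofReal (h s) = ENNReal.ofReal (∫ s in a..b, h s) := by
  rw [intervalIntegral.integral_of_le hab,
    ofReal_integral_eq_lintegral_ofReal hh.1 (ae_restrict_of_forall_mem measurableSet_Ioc h0)]

theorem lintegral_Icc_sub_add (F : ℝ → ℝ≥0∞) (c : ℝ) {s : ℝ} (hs : 0 < s) :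
    ∫⁻ u in Icc (c - s) (c + s), F u =
      ENNReal.ofReal s * ∫⁻ θ in Icc (-1 : ℝ) 1, F (c + s * θ) := by
  have himage : (fun θ => c + s * θ) '' Icc (-1) 1 = Icc (c - s) (c + s) := by
    simpa [add_comm, sub_eq_add_neg] using image_affine_Icc' hs c (-1) 1
  have hderiv (θ : ℝ) : HasDerivAt (fun θ => c + s * θ) s θ := by
    simpa using ((hasDerivAt_id θ).const_mul s).const_add c
  rw [← himage, lintegral_image_eq_lintegral_abs_deriv_mul measurableSet_Icc
    (fun θ _ => (hderiv θ).hasDerivWithinAt) (fun θ _ θ' _ h => by simpa [hs.ne'] using h),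
    abs_of_pos hs, lintegral_const_mul' _ _ ENNReal.ofReal_ne_top]

theorem enorm_sub_le_lintegral_deriv {F : Type*} [NormedAddCommGroup F] [NormedSpace ℝ F]
    [CompleteSpace F] {g : ℝ → F} {a b : ℝ} (hab : a ≤ b)
    (hg : ∀ t ∈ Icc a b, DifferentiableAt ℝ g t) :
    ‖g b - g a‖ₑ ≤ ∫⁻ t in Ioc a b, ‖deriv g t‖ₑ := by
  by_cases hfin : ∫⁻ t in Ioc a b, ‖deriv g t‖ₑ = ∞
  · exact hfin ▸ le_top
  have hint : IntervalIntegrable (deriv g) volume a b :=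
    (intervalIntegrable_iff_integrableOn_Ioc_of_le hab).2
      ⟨(stronglyMeasurable_deriv g).aestronglyMeasurable, lt_top_iff_ne_top.2 hfin⟩
  rw [← intervalIntegral.integral_eq_sub_of_hasDerivAt
    (fun t ht => (hg t (uIcc_of_le hab ▸ ht)).hasDerivAt) hint,
    intervalIntegral.integral_of_le hab]
  exact enorm_integral_le_lintegral_enorm _

theorem lintegral_enorm_mul_enorm_le {α : Type*} [MeasurableSpace α] {μ : Measure α}
    {E : Type*} [NormedAddCommGroup E] {g : α → E} {k : α → ℝ}
    (hg : AEStronglyMeasurable (fun y => ‖g y‖) μ) (hk : AEStronglyMeasurable k μ)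
    {p q : ℝ≥0∞} [p.HolderConjugate q] :
    ∫⁻ y, ‖g y‖ₑ * ‖k y‖ₑ ∂μ ≤ eLpNorm g p μ * eLpNorm k q μ := by
  simpa [eLpNorm_one_eq_lintegral_enorm, enorm_mul] using
    eLpNorm_smul_le_mul_eLpNorm (r := 1) (p := p) (q := q) hk hg

theorem measure_univ_mul_enorm_sub_le {α : Type*} [MeasurableSpace α] {μ : Measure α}
    {F : Type*} [NormedAddCommGroup F] {h : α → F}
    (hh : AEStronglyMeasurable h μ) (c d : F) :
    μ univ * ‖c - d‖ₑ ≤ ∫⁻ u, ‖h u - c‖ₑ ∂μ + ∫⁻ u, ‖h u - d‖ₑ ∂μ := by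
  have hmeas : AEMeasurable (fun u => ‖h u - c‖ₑ) μ := (hh.sub aestronglyMeasurable_const).enorm
  rw [← lintegral_add_left' hmeas, mul_comm, ← lintegral_const]
  refine lintegral_mono fun u => ?_
  simpa only [← edist_eq_enorm_sub] using edist_triangle_left c d (h u)

theorem tendsto_eLpNorm_restrict_of_antitone {α E ι : Type*} [MeasurableSpace α] {μ : Measure α}
    [NormedAddCommGroup E] [Preorder ι] [(atTop : Filter ι).IsCountablyGenerated] {g : α → E}
    {p : ℝ≥0∞} (hp0 : p ≠ 0) (hp : p ≠ ∞)
    {s : ι → Set α} (hs : ∀ i, MeasurableSet (s i)) (hanti : Antitone s) (hempty : ⋂ i, s i = ∅)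
    {i₀ : ι} (hg : MemLp g p (μ.restrict (s i₀))) :
    Tendsto (fun i => eLpNorm g p (μ.restrict (s i))) atTop (𝓝 0) := by
  set ν := μ.withDensity fun x => ‖g x‖ₑ ^ p.toReal
  have hνs (i : ι) : ν (s i) = ∫⁻ x in s i, ‖g x‖ₑ ^ p.toReal ∂μ := withDensity_apply _ (hs i)
  have hfin : ν (s i₀) ≠ ∞ := by
    rw [hνs]
    exact ((eLpNorm_lt_top_iff_lintegral_rpow_enorm_lt_top hp0 hp).1 hg.2).ne
  have htendsto : Tendsto (fun i => ν (s i)) atTop (𝓝 0) := by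
    simpa [hempty, Function.comp_def] using tendsto_measure_iInter_atTop (μ := ν)
      (fun i => (hs i).nullMeasurableSet) hanti ⟨i₀, hfin⟩
  have hpos : 0 < 1 / p.toReal := one_div_pos.2 (ENNReal.toReal_pos hp0 hp)
  simpa only [eLpNorm_eq_lintegral_rpow_enorm_toReal hp0 hp, hνs, ENNReal.zero_rpow_of_pos hpos]
    using htendsto.ennrpow_const (1 / p.toReal)

theorem lt_two_of_holderConjugate {p q : ℝ≥0∞} [p.HolderConjugate q] (hp : 2 < p) : q < 2 := by
  by_contra! hq
  have hsum : p⁻¹ + q⁻¹ < 2⁻¹ + 2⁻¹ :=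
    ENNReal.add_lt_add_of_lt_of_le (ENNReal.inv_ne_top.2 (by positivity))
      (ENNReal.inv_lt_inv.2 hp) (ENNReal.inv_le_inv.2 hq)
  rw [ENNReal.inv_two_add_inv_two] at hsum
  exact hsum.ne (ENNReal.HolderConjugate.inv_add_inv_eq_one p q)

theorem memLp_of_integrableOn_norm_rpow {α E : Type*} [MeasurableSpace α] [TopologicalSpace α]
    [OpensMeasurableSpace α] [SecondCountableTopology α]
    {μ : Measure α} [NormedAddCommGroup E] {g : α → E} {s : Set α} (hs : MeasurableSet s)
    (hg : ContinuousOn g s) {p : ℝ} (hp : 0 < p) (hint : IntegrableOn (fun x => ‖g x‖ ^ p) s μ) :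
    MemLp g (ENNReal.ofReal p) (μ.restrict s) := by
  rw [← integrable_norm_rpow_iff (hg.aestronglyMeasurable hs) (by simpa using hp)
    ENNReal.ofReal_ne_top, ENNReal.toReal_ofReal hp.le]
  exact hint

theorem exists_forall_norm_le_of_isLittleO_cobounded {E F : Type*} [SeminormedAddCommGroup E]
    [NormedAddCommGroup F] {f : E → F} {g : E → ℝ} (h : f =o[cobounded E] g) (hg : ∀ x, 0 ≤ g x)
    {ε : ℝ} (hε : 0 < ε) (r : ℝ) : ∃ R, r < R ∧ ∀ x, R ≤ ‖x‖ → ‖f x‖ ≤ ε * g x := by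
  have hle := Asymptotics.isLittleO_iff.1 h hε
  simp only [Real.norm_of_nonneg (hg _)] at hle
  obtain ⟨R, -, hR⟩ := hasBasis_cobounded_norm.eventually_iff.1 hle
  exact ⟨max R (r + 1), (lt_add_one r).trans_le (le_max_right _ _),
    fun x hx => hR ((le_max_left _ _).trans hx)⟩

theorem eventually_const_add_sqrt_log_le (K : ℝ) {ε : ℝ} (hε : 0 < ε) :
    ∀ᶠ X in atTop, K + ε / 4 * √(2 * log (3 * X)) ≤ ε * √(log X) := by
  have hlarge : Tendsto (fun X => ε / 2 * √(log X)) atTop atTop :=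
    (tendsto_sqrt_atTop.comp tendsto_log_atTop).const_mul_atTop (half_pos hε)
  filter_upwards [hlarge.eventually_ge_atTop K, eventually_ge_atTop 3] with X hK hX
  have hsqrt : √(2 * log (3 * X)) ≤ 2 * √(log X) := by
    rw [Real.sqrt_le_left (by positivity), mul_pow, Real.sq_sqrt (log_nonneg (by linarith)),
      log_mul three_ne_zero (by linarith)]
    linarith [log_le_log zero_lt_three hX]
  nlinarith

/-- The cone with apex `x` and slopes in `[-1, 1]` about the direction of the positive first axis,
truncated to the points whose horizontal distance from `x` lies in `S`. -/
def cone (x : ℝ × ℝ) (S : Set ℝ) : Set (ℝ × ℝ) :=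
  {y | y.1 - x.1 ∈ S ∧ |y.2 - x.2| ≤ y.1 - x.1}

/-- The closed half plane on which the first coordinate is at least `a`. -/
def halfPlane (a : ℝ) : Set (ℝ × ℝ) := {y | a ≤ y.1}

/-- The kernel against which the derivative is integrated over a cone with apex `x`: on such a cone
it is comparable with the inverse distance from `x`. -/
noncomputable def coneKernel (x y : ℝ × ℝ) : ℝ := (y.1 - x.1)⁻¹

/-- The `L^q` norm of `coneKernel x` over the cone of height one with apex `x`. It is independent of
`x`; the closed form is the actual norm only for `0 < q < 2`, where that norm is finite. -/
noncomputable def nearKernelNorm (q : ℝ≥0∞) : ℝ≥0∞ :=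
  ENNReal.ofReal (2 / (2 - q.toReal)) ^ (1 / q.toReal)

theorem measurableSet_cone (x : ℝ × ℝ) {S : Set ℝ} (hS : MeasurableSet S) :
    MeasurableSet (cone x S) :=
  (hS.preimage (measurable_fst.sub_const x.1)).inter <|
    measurableSet_le (measurable_snd.sub_const x.2).abs (measurable_fst.sub_const x.1)

theorem mk_add_mem_cone {x : ℝ × ℝ} {S : Set ℝ} {s u : ℝ} :
    (x.1 + s, u) ∈ cone x S ↔ s ∈ S ∧ u ∈ Icc (x.2 - s) (x.2 + s) := by
  rw [← mem_Icc_iff_abs_le, abs_sub_comm]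
  simp [cone]

theorem cone_subset_halfPlane {a : ℝ} {x : ℝ × ℝ} (hx : a ≤ x.1) (S : Set ℝ) :
    cone x S ⊆ halfPlane a := fun _ hy =>
  hx.trans (sub_nonneg.1 ((abs_nonneg _).trans hy.2))

theorem measurable_coneKernel (x : ℝ × ℝ) : Measurable (coneKernel x) := by
  unfold coneKernel
  fun_prop

theorem lintegral_cone {H : ℝ × ℝ → ℝ≥0∞} (hH : Measurable H) (x : ℝ × ℝ) {S : Set ℝ}
    (hS : MeasurableSet S) :
    ∫⁻ y in cone x S, H y =
      ∫⁻ s in S, ∫⁻ u in Icc (x.2 - s) (x.2 + s), H (x.1 + s, u) := by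
  rw [← lintegral_indicator (measurableSet_cone x hS), Measure.volume_eq_prod,
    lintegral_prod _ (hH.indicator (measurableSet_cone x hS)).aemeasurable,
    ← lintegral_add_left_eq_self _ x.1, ← lintegral_indicator hS]
  refine lintegral_congr fun s => ?_
  by_cases hs : s ∈ S
  · rw [indicator_of_mem hs, ← lintegral_indicator measurableSet_Icc]
    refine lintegral_congr fun u => indicator_eq_indicator ?_ rfl
    rw [mk_add_mem_cone, and_iff_right hs]
  · simp [indicator, mk_add_mem_cone, hs]

theorem lintegral_cone_slopes {H : ℝ × ℝ → ℝ≥0∞} (hH : Measurable H) (x : ℝ × ℝ) {S : Set ℝ}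
    (hS : MeasurableSet S) (hpos : S ⊆ Ioi 0) :
    ∫⁻ y in cone x S, H y * ‖coneKernel x y‖ₑ =
      ∫⁻ s in S, ∫⁻ θ in Icc (-1 : ℝ) 1, H (x.1 + s, x.2 + s * θ) := by
  rw [lintegral_cone (H := fun y => H y * ‖coneKernel x y‖ₑ)
    (hH.mul (measurable_coneKernel x).enorm) x hS]
  refine setLIntegral_congr_fun hS fun s hs => ?_
  have hs0 : 0 < s := hpos hs
  have hcancel : ENNReal.ofReal s * ‖s⁻¹‖ₑ = 1 := by
    rw [Real.enorm_of_nonneg (inv_nonneg.2 hs0.le), ← ENNReal.ofReal_mul hs0.le,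
      mul_inv_cancel₀ hs0.ne', ENNReal.ofReal_one]
  simp only [lintegral_Icc_sub_add _ _ hs0, coneKernel, add_sub_cancel_left]
  rw [lintegral_mul_const' _ _ enorm_ne_top, mul_left_comm, hcancel, mul_one]

theorem eLpNorm_coneKernel {q : ℝ≥0∞} (hq0 : q ≠ 0) (hq : q ≠ ∞) (x : ℝ × ℝ) {S : Set ℝ}
    (hS : MeasurableSet S) (hpos : S ⊆ Ioi 0) :
    eLpNorm (coneKernel x) q (volume.restrict (cone x S)) =
      (∫⁻ s in S, ENNReal.ofReal (2 * s ^ (1 - q.toReal))) ^ (1 / q.toReal) := by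
  rw [eLpNorm_eq_lintegral_rpow_enorm_toReal hq0 hq,
    lintegral_cone ((measurable_coneKernel x).enorm.pow_const _) x hS]
  congr 1
  refine setLIntegral_congr_fun hS fun s hs => ?_
  have hs0 : 0 < s := hpos hs
  simp only [coneKernel, add_sub_cancel_left, lintegral_const, Measure.restrict_apply_univ,
    Real.volume_Icc]
  rw [Real.enorm_of_nonneg (inv_nonneg.2 hs0.le),
    ENNReal.ofReal_rpow_of_nonneg (by positivity) (by positivity),
    ← ENNReal.ofReal_mul (by positivity), Real.inv_rpow hs0.le, Real.rpow_sub hs0, Real.rpow_one]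
  ring_nf

theorem eLpNorm_coneKernel_near {q : ℝ≥0∞} (hq0 : q ≠ 0) (hq : q < 2) (x : ℝ × ℝ) :
    eLpNorm (coneKernel x) q (volume.restrict (cone x (Ioc 0 1))) = nearKernelNorm q := by
  have hq2 : q.toReal < 2 := by simpa using ENNReal.toReal_strict_mono (by simp) hq
  rw [nearKernelNorm, eLpNorm_coneKernel hq0 hq.ne_top x measurableSet_Ioc fun s hs => hs.1,
    setLIntegral_ofReal zero_le_one
      ((intervalIntegral.intervalIntegrable_rpow' (by linarith)).const_mul 2)
      fun s hs => mul_nonneg zero_le_two (Real.rpow_nonneg hs.1.le _),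
    intervalIntegral.integral_const_mul, integral_rpow (Or.inl (by linarith))]
  congr 2
  rw [Real.one_rpow, Real.zero_rpow (by linarith)]
  ring

theorem eLpNorm_two_coneKernel_far (x : ℝ × ℝ) {T : ℝ} (hT : 1 ≤ T) :
    eLpNorm (coneKernel x) 2 (volume.restrict (cone x (Ioc 1 T))) =
      ENNReal.ofReal √(2 * log T) := by
  rw [eLpNorm_coneKernel two_ne_zero ENNReal.ofNat_ne_top x measurableSet_Ioc
    fun s hs => zero_lt_one.trans hs.1]
  have hinv : ∀ s : ℝ, s ^ (1 - (2 : ℝ≥0∞).toReal) = s⁻¹ := fun s => by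
    rw [← Real.rpow_neg_one]
    norm_num
  simp only [hinv]
  rw [setLIntegral_ofReal hT ?_ fun s hs => ?_, intervalIntegral.integral_const_mul,
    integral_inv_of_pos one_pos (by linarith), div_one]
  · have : 0 ≤ log T := Real.log_nonneg hT
    rw [ENNReal.ofReal_rpow_of_nonneg (by positivity) (by positivity), Real.sqrt_eq_rpow,
      ENNReal.toReal_ofNat]
  · refine IntervalIntegrable.const_mul ?_ _
    refine intervalIntegral.intervalIntegrable_inv (fun s hs => ?_) continuousOn_id
    rw [Set.uIcc_of_le hT] at hs
    exact (zero_lt_one.trans_le hs.1).ne'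
  · have : 0 < s := zero_lt_one.trans hs.1
    positivity

theorem nearKernelNorm_ne_top (q : ℝ≥0∞) : nearKernelNorm q ≠ ∞ :=
  ENNReal.rpow_ne_top_of_nonneg (by positivity) ENNReal.ofReal_ne_top

section NormedGroup

variable {F : Type*} [NormedAddCommGroup F]

/-- The Hölder bound for `∫ ‖g‖ * coneKernel x` over a cone of height `T` in `halfPlane a`: the
`L^p` norm of `g` controls the part within unit height of the apex, the `L^2` norm the rest. -/
noncomputable def coneBound (g : ℝ × ℝ → F) (a : ℝ) (p q : ℝ≥0∞) (T : ℝ) : ℝ≥0∞ :=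
  eLpNorm g p (volume.restrict (halfPlane a)) * nearKernelNorm q +
    eLpNorm g 2 (volume.restrict (halfPlane a)) * ENNReal.ofReal √(2 * log T)

theorem coneBound_mono (g : ℝ × ℝ → F) (a : ℝ) (p q : ℝ≥0∞) {T L : ℝ} (hT : 0 < T)
    (hTL : T ≤ L) : coneBound g a p q T ≤ coneBound g a p q L := by
  unfold coneBound
  gcongr

theorem lintegral_cone_le_eLpNorm_mul_eLpNorm {g : ℝ × ℝ → F} {a : ℝ}
    (hg : AEStronglyMeasurable (fun y => ‖g y‖) (volume.restrict (halfPlane a)))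
    {x : ℝ × ℝ} (hx : a ≤ x.1) (S : Set ℝ) (p q : ℝ≥0∞) [p.HolderConjugate q] :
    ∫⁻ y in cone x S, ‖g y‖ₑ * ‖coneKernel x y‖ₑ ≤
      eLpNorm g p (volume.restrict (halfPlane a)) *
        eLpNorm (coneKernel x) q (volume.restrict (cone x S)) := by
  have hle := Measure.restrict_mono_set volume (cone_subset_halfPlane hx S)
  exact (lintegral_enorm_mul_enorm_le (p := p) (q := q) (hg.mono_measure hle)
    (measurable_coneKernel x).aestronglyMeasurable).trans
    (mul_le_mul_left (eLpNorm_mono_measure g hle) _)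

theorem lintegral_cone_le_coneBound {g : ℝ × ℝ → F} {a : ℝ}
    (hg : AEStronglyMeasurable (fun y => ‖g y‖) (volume.restrict (halfPlane a)))
    {x : ℝ × ℝ} (hx : a ≤ x.1) {p q : ℝ≥0∞} [p.HolderConjugate q] (hp : 2 < p)
    {T : ℝ} (hT : 1 ≤ T) :
    ∫⁻ y in cone x (Ioc 0 T), ‖g y‖ₑ * ‖coneKernel x y‖ₑ ≤ coneBound g a p q T := by
  have hunion : cone x (Ioc 0 T) = cone x (Ioc 0 1) ∪ cone x (Ioc 1 T) := by
    rw [← Ioc_union_Ioc_eq_Ioc zero_le_one hT]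
    ext y
    exact or_and_right
  rw [hunion, coneBound, ← eLpNorm_coneKernel_near (ENNReal.HolderConjugate.ne_zero q p)
    (lt_two_of_holderConjugate hp) x, ← eLpNorm_two_coneKernel_far x hT]
  exact (lintegral_union_le _ _ _).trans <| add_le_add
    (lintegral_cone_le_eLpNorm_mul_eLpNorm hg hx _ p q)
    (lintegral_cone_le_eLpNorm_mul_eLpNorm hg hx _ 2 2)

theorem exists_eLpNorm_restrict_halfPlane_le {g : ℝ × ℝ → F} {p : ℝ≥0∞} (hp0 : p ≠ 0)
    (hp : p ≠ ∞) {a₀ : ℝ} (hg : MemLp g p (volume.restrict (halfPlane a₀))) {δ : ℝ≥0∞}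
    (hδ : 0 < δ) : ∃ a ≥ a₀, eLpNorm g p (volume.restrict (halfPlane a)) ≤ δ := by
  have hempty : ⋂ a, halfPlane a = ∅ := eq_empty_of_forall_notMem fun y hy =>
    (lt_add_one y.1).not_ge (mem_iInter.1 hy (y.1 + 1))
  have htendsto := tendsto_eLpNorm_restrict_of_antitone hp0 hp
    (fun _ => measurableSet_le measurable_const measurable_fst)
    (fun _ _ hab _ hy => hab.trans hy) hempty hg
  exact ((eventually_ge_atTop a₀).and (htendsto.eventually_le_const hδ)).exists

end NormedGroup

theorem measurePreserving_linearIsometryEquiv (e : (ℝ × ℝ) ≃ₗᵢ[ℝ] (ℝ × ℝ)) :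
    MeasurePreserving e := by
  rw [← hausdorffMeasure_prod_real]
  exact e.toIsometryEquiv.measurePreserving_hausdorffMeasure 2

theorem eventually_cobounded_of_quadrants {P : ℝ × ℝ → Prop}
    (h : ∀ e : (ℝ × ℝ) ≃ₗᵢ[ℝ] (ℝ × ℝ), ∀ᶠ x in cobounded (ℝ × ℝ), |x.2| ≤ x.1 → P (e x)) :
    ∀ᶠ x in cobounded (ℝ × ℝ), P x := by
  let swap : (ℝ × ℝ) ≃ₗᵢ[ℝ] (ℝ × ℝ) :=
    { LinearEquiv.prodComm ℝ ℝ ℝ with norm_map' := fun x => by simp [Prod.norm_def, max_comm] }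
  have hmove (e : (ℝ × ℝ) ≃ₗᵢ[ℝ] (ℝ × ℝ)) :
      ∀ᶠ x in cobounded (ℝ × ℝ), |(e.symm x).2| ≤ (e.symm x).1 → P x := by
    simpa using e.symm.isometry.antilipschitz.tendsto_cobounded.eventually (h e)
  filter_upwards [hmove (.refl ℝ _), hmove (.neg ℝ), hmove swap, hmove (swap.trans (.neg ℝ))]
    with x hright hleft hup hdown
  rcases le_total |x.2| |x.1| with hx | hx
  · rcases abs_cases x.1 with ⟨h0, -⟩ | ⟨h0, -⟩
    · exact hright (hx.trans_eq h0)
    · exact hleft (((abs_neg x.2).trans_le hx).trans_eq h0)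
  · rcases abs_cases x.2 with ⟨h0, -⟩ | ⟨h0, -⟩
    · exact hup (hx.trans_eq h0)
    · exact hdown (((abs_neg x.1).trans_le hx).trans_eq h0)

section NormedSpace

variable {F : Type*} [NormedAddCommGroup F] [NormedSpace ℝ F] {f : ℝ × ℝ → F}

theorem memLp_fderiv_comp_linearIsometryEquiv {r : ℝ} {p : ℝ≥0∞}
    (hf : MemLp (fderiv ℝ f) p (volume.restrict {x | r < ‖x‖})) (e : (ℝ × ℝ) ≃ₗᵢ[ℝ] (ℝ × ℝ)) :
    MemLp (fderiv ℝ (f ∘ e)) p (volume.restrict {x | r < ‖x‖}) := by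
  have hpre : e ⁻¹' {x | r < ‖x‖} = {x | r < ‖x‖} := by simp
  have hmp := (measurePreserving_linearIsometryEquiv e).restrict_preimage
    (measurableSet_lt measurable_const measurable_norm : MeasurableSet {x : ℝ × ℝ | r < ‖x‖})
  rw [hpre] at hmp
  have hchain : fderiv ℝ (f ∘ e) = fun x =>
      (fderiv ℝ f (e x)).comp (e.toContinuousLinearEquiv : (ℝ × ℝ) →L[ℝ] (ℝ × ℝ)) :=
    funext fun _ => e.toContinuousLinearEquiv.comp_right_fderiv
  rw [hchain]
  exact ((ContinuousLinearMap.compL ℝ (ℝ × ℝ) (ℝ × ℝ) F).flip _).comp_memLp'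
    (hf.comp_measurePreserving hmp)

variable [CompleteSpace F]

theorem enorm_sub_le_lintegral_slope {x : ℝ × ℝ}
    (hf : ∀ y ∈ halfPlane x.1, DifferentiableAt ℝ f y) {T θ : ℝ} (hT : 0 ≤ T)
    (hθ : θ ∈ Icc (-1 : ℝ) 1) :
    ‖f (x.1 + T, x.2 + T * θ) - f x‖ₑ ≤
      ∫⁻ s in Ioc 0 T, ‖fderiv ℝ f (x.1 + s, x.2 + s * θ)‖ₑ := by
  have hline (s : ℝ) :
      HasDerivAt (fun s : ℝ => (x.1 + s, x.2 + s * θ)) ((1 : ℝ), θ) s := by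
    refine ((hasDerivAt_id s).const_add x.1).prodMk ?_
    simpa using ((hasDerivAt_id s).mul_const θ).const_add x.2
  have hcomp : ∀ s ∈ Icc 0 T, HasDerivAt (fun s : ℝ => f (x.1 + s, x.2 + s * θ))
      (fderiv ℝ f (x.1 + s, x.2 + s * θ) (1, θ)) s := fun s hs =>
    (hf _ (le_add_of_nonneg_right hs.1)).hasFDerivAt.comp_hasDerivAt s (hline s)
  have hdirection : ‖((1 : ℝ), θ)‖ₑ ≤ 1 := by
    rw [← ofReal_norm, ENNReal.ofReal_le_one, Prod.norm_mk, norm_one]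
    exact max_le le_rfl (abs_le.2 hθ)
  calc
    _ ≤ ∫⁻ s in Ioc 0 T, ‖deriv (fun s : ℝ => f (x.1 + s, x.2 + s * θ)) s‖ₑ := by
      simpa using enorm_sub_le_lintegral_deriv hT fun s hs => (hcomp s hs).differentiableAt
    _ ≤ _ := setLIntegral_mono' measurableSet_Ioc fun s hs => by
      rw [(hcomp s (Ioc_subset_Icc_self hs)).deriv]
      exact (ContinuousLinearMap.le_opENorm _ _).trans (mul_le_of_le_one_right' hdirection)

theorem lintegral_enorm_sub_le_lintegral_cone {x : ℝ × ℝ}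
    (hf : ∀ y ∈ halfPlane x.1, DifferentiableAt ℝ f y) {T : ℝ} (hT : 0 < T) :
    ∫⁻ u in Icc (x.2 - T) (x.2 + T), ‖f (x.1 + T, u) - f x‖ₑ ≤
      ENNReal.ofReal T * ∫⁻ y in cone x (Ioc 0 T), ‖fderiv ℝ f y‖ₑ * ‖coneKernel x y‖ₑ := by
  have hmeas : Measurable fun y => ‖fderiv ℝ f y‖ₑ := (measurable_fderiv ℝ f).enorm
  rw [lintegral_Icc_sub_add _ _ hT,
    lintegral_cone_slopes hmeas x measurableSet_Ioc fun s hs => hs.1,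
    lintegral_lintegral_swap (f := fun s θ : ℝ => ‖fderiv ℝ f (x.1 + s, x.2 + s * θ)‖ₑ)
      (by fun_prop)]
  exact mul_le_mul_right (setLIntegral_mono' measurableSet_Icc fun θ hθ =>
    enorm_sub_le_lintegral_slope hf hT.le hθ) _

variable {a : ℝ}

theorem lintegral_enorm_sub_le_coneBound (hf : ∀ y ∈ halfPlane a, DifferentiableAt ℝ f y)
    {p q : ℝ≥0∞} [p.HolderConjugate q] (hp : 2 < p) {x : ℝ × ℝ} (hx : a ≤ x.1)
    {T L : ℝ} (hT : 1 ≤ T) (hTL : T ≤ L) :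
    ∫⁻ u in Icc (x.2 - T) (x.2 + T), ‖f (x.1 + T, u) - f x‖ₑ ≤
      ENNReal.ofReal L * coneBound (fderiv ℝ f) a p q L := by
  have hT0 : 0 < T := zero_lt_one.trans_le hT
  calc
    _ ≤ ENNReal.ofReal T * ∫⁻ y in cone x (Ioc 0 T), ‖fderiv ℝ f y‖ₑ * ‖coneKernel x y‖ₑ :=
      lintegral_enorm_sub_le_lintegral_cone (fun y hy => hf y (hx.trans hy)) hT0
    _ ≤ ENNReal.ofReal T * coneBound (fderiv ℝ f) a p q T := by
      gcongr
      exact lintegral_cone_le_coneBound (measurable_fderiv ℝ f).norm.aestronglyMeasurable hx hp hT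
    _ ≤ _ := by
      gcongr
      exact coneBound_mono _ _ _ _ hT0 hTL

theorem enorm_sub_le_coneBound (hf : ∀ y ∈ halfPlane a, DifferentiableAt ℝ f y)
    {p q : ℝ≥0∞} [p.HolderConjugate q] (hp : 2 < p) (ha : 0 ≤ a) {x : ℝ × ℝ} (hax : a ≤ x.1)
    (hx1 : 1 ≤ x.1) (hx : |x.2| ≤ x.1) :
    ‖f x - f (a, 0)‖ₑ ≤ 3 * coneBound (fderiv ℝ f) a p q (3 * x.1) := by
  set X := x.1
  set M := coneBound (fderiv ℝ f) a p q (3 * X)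
  obtain ⟨hx_neg, hx_pos⟩ := abs_le.1 hx
  have hcone {z : ℝ × ℝ} {T : ℝ} (hz : a ≤ z.1) (hzT : z.1 + T = 3 * X) (hT : 1 ≤ T)
      (hTL : T ≤ 3 * X) (hcover : Icc (-X) X ⊆ Icc (z.2 - T) (z.2 + T)) :
      ∫⁻ u in Icc (-X) X, ‖f (3 * X, u) - f z‖ₑ ≤ ENNReal.ofReal (3 * X) * M :=
    hzT ▸ (lintegral_mono_set hcover).trans
      (hzT ▸ lintegral_enorm_sub_le_coneBound hf hp hz hT hTL)
  have hfrom_x : ∫⁻ u in Icc (-X) X, ‖f (3 * X, u) - f x‖ₑ ≤ ENNReal.ofReal (3 * X) * M :=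
    hcone (T := 2 * X) hax (by ring) (by linarith) (by linarith)
      (Icc_subset_Icc (by linarith) (by linarith))
  have hfrom_axis : ∫⁻ u in Icc (-X) X, ‖f (3 * X, u) - f (a, 0)‖ₑ ≤ ENNReal.ofReal (3 * X) * M :=
    hcone (T := 3 * X - a) le_rfl (by simp) (by linarith) (by linarith)
      (Icc_subset_Icc (by dsimp only; linarith) (by dsimp only; linarith))
  have hcont : Continuous fun u : ℝ => f (3 * X, u) := continuous_iff_continuousAt.2 fun u =>
    (hf (3 * X, u) (by change a ≤ 3 * X; linarith)).continuousAt.comp (by fun_prop)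
  have hsum := (measure_univ_mul_enorm_sub_le hcont.aestronglyMeasurable (f x) (f (a, 0))).trans
    (add_le_add hfrom_x hfrom_axis)
  have hlength : volume.restrict (Icc (-X) X) univ = ENNReal.ofReal (2 * X) := by
    rw [Measure.restrict_apply_univ, Real.volume_Icc, sub_neg_eq_add, two_mul]
  have hscale : ENNReal.ofReal (3 * X) * M + ENNReal.ofReal (3 * X) * M =
      ENNReal.ofReal (2 * X) * (3 * M) := by
    rw [ENNReal.ofReal_mul zero_le_three, ENNReal.ofReal_mul zero_le_two,
      ENNReal.ofReal_ofNat, ENNReal.ofReal_ofNat]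
    ring
  rw [hlength, hscale] at hsum
  exact (ENNReal.mul_le_mul_iff_right (by simp; linarith) ENNReal.ofReal_ne_top).1 hsum

theorem eventually_norm_le_of_quadrant {a₀ : ℝ} (ha₀ : 0 ≤ a₀)
    (hf : ∀ y ∈ halfPlane a₀, DifferentiableAt ℝ f y)
    (h2 : MemLp (fderiv ℝ f) 2 (volume.restrict (halfPlane a₀))) {p : ℝ≥0∞} (hp : 2 < p)
    (hfp : MemLp (fderiv ℝ f) p (volume.restrict (halfPlane a₀))) {ε : ℝ} (hε : 0 < ε) :
    ∀ᶠ x in cobounded (ℝ × ℝ), |x.2| ≤ x.1 → ‖f x‖ ≤ ε * √(log ‖x‖) := by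
  have : Fact (1 ≤ p) := ⟨one_le_two.trans hp.le⟩
  obtain ⟨a, ha, hsmall⟩ := exists_eLpNorm_restrict_halfPlane_le two_ne_zero ENNReal.ofNat_ne_top
    h2 (ENNReal.ofReal_pos.2 (by positivity : 0 < ε / 12))
  have hle : volume.restrict (halfPlane a) ≤ volume.restrict (halfPlane a₀) :=
    Measure.restrict_mono_set volume fun _ hy => ha.trans hy
  set A := eLpNorm (fderiv ℝ f) p (volume.restrict (halfPlane a)) *
    nearKernelNorm p.conjExponent
  have hA_top : A ≠ ∞ :=
    ENNReal.mul_ne_top (hfp.mono_measure hle).2.ne (nearKernelNorm_ne_top _)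
  filter_upwards [tendsto_norm_cobounded_atTop.eventually (eventually_const_add_sqrt_log_le
    (‖f (a, 0)‖ + 3 * A.toReal) hε), tendsto_norm_cobounded_atTop.eventually_ge_atTop a,
    tendsto_norm_cobounded_atTop.eventually_ge_atTop 1] with x hlog hax hx1 hx
  have hnorm : ‖x‖ = x.1 := by
    rw [Prod.norm_def, Real.norm_eq_abs, Real.norm_eq_abs,
      abs_of_nonneg ((abs_nonneg _).trans hx), max_eq_left hx]
  rw [hnorm] at hlog hax hx1 ⊢
  have hincrement : ‖f x - f (a, 0)‖ₑ ≤
      ENNReal.ofReal (3 * (A.toReal + ε / 12 * √(2 * log (3 * x.1)))) := by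
    refine (enorm_sub_le_coneBound (fun y hy => hf y (ha.trans hy))
      (q := p.conjExponent) hp (ha₀.trans ha) hax hx1 hx).trans ?_
    rw [coneBound, ENNReal.ofReal_mul zero_le_three, ENNReal.ofReal_ofNat,
      ENNReal.ofReal_add ENNReal.toReal_nonneg (by positivity), ENNReal.ofReal_toReal hA_top,
      ENNReal.ofReal_mul (by positivity)]
    gcongr
  rw [← ofReal_norm, ENNReal.ofReal_le_ofReal_iff (by positivity)] at hincrement
  linarith [norm_le_norm_add_norm_sub' (f x) (f (a, 0))]

theorem uniform_log_decay_general {r0 : ℝ} (hf : DifferentiableOn ℝ f {x | r0 < ‖x‖})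
    (hL2 : MemLp (fderiv ℝ f) 2 (volume.restrict {x | r0 < ‖x‖})) {p : ℝ≥0∞} (hp : 2 < p)
    (hLp : MemLp (fderiv ℝ f) p (volume.restrict {x | r0 < ‖x‖})) :
    f =o[cobounded (ℝ × ℝ)] fun x => √(log ‖x‖) := by
  refine Asymptotics.isLittleO_iff.2 fun ε hε => ?_
  simp only [Real.norm_of_nonneg (Real.sqrt_nonneg _)]
  refine eventually_cobounded_of_quadrants fun e => ?_
  have hsub : halfPlane (max r0 0 + 1) ⊆ {x | r0 < ‖x‖} := fun x hx =>
    calc r0 < max r0 0 + 1 := (le_max_left _ _).trans_lt (lt_add_one _)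
      _ ≤ ‖x‖ := (hx.trans (le_abs_self _)).trans (norm_fst_le x)
  have hle := Measure.restrict_mono_set volume hsub
  have hopen : IsOpen {x : ℝ × ℝ | r0 < ‖x‖} := isOpen_lt continuous_const continuous_norm
  have hfe : ∀ y ∈ halfPlane (max r0 0 + 1), DifferentiableAt ℝ (f ∘ e) y := fun y hy =>
    (hf.differentiableAt (hopen.mem_nhds (by simpa using hsub hy))).comp y e.differentiableAt
  simpa only [Function.comp_apply, e.norm_map] using
    eventually_norm_le_of_quadrant (by positivity) hfe
      ((memLp_fderiv_comp_linearIsometryEquiv hL2 e).mono_measure hle) hp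
      ((memLp_fderiv_comp_linearIsometryEquiv hLp e).mono_measure hle) hε

end NormedSpace

/-- Uniform pointwise decay (Galdi, Theorem II.9.1): if `∇f ∈ L² ∩ Lᵖ` on the exterior of a
ball in the plane for some `2 < p < ∞`, then `|f(x)| = o(√(ln|x|))` uniformly. -/
theorem uniform_log_decay (r0 : ℝ) (hr0 : 0 < r0) (f : ℝ × ℝ → ℝ)
    (hf : ContDiffOn ℝ 1 f {x : ℝ × ℝ | r0 < ‖x‖})
    (p : ℝ) (hp2 : 2 < p)
    (hL2 : IntegrableOn (fun x => ‖fderiv ℝ f x‖ ^ (2:ℝ)) {x : ℝ × ℝ | r0 < ‖x‖})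
    (hLp : IntegrableOn (fun x => ‖fderiv ℝ f x‖ ^ p) {x : ℝ × ℝ | r0 < ‖x‖}) :
    ∀ ε : ℝ, 0 < ε → ∃ R : ℝ, r0 < R ∧ ∀ x : ℝ × ℝ, R ≤ ‖x‖ →
      |f x| ≤ ε * Real.sqrt (Real.log ‖x‖) := by
  have hopen : IsOpen {x : ℝ × ℝ | r0 < ‖x‖} := isOpen_lt continuous_const continuous_norm
  have hmemLp {q : ℝ} := memLp_of_integrableOn_norm_rpow (μ := volume) (p := q)
    hopen.measurableSet (hf.continuousOn_fderiv_of_isOpen hopen le_rfl)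
  have hdecay := uniform_log_decay_general (hf.differentiableOn one_ne_zero)
    (by simpa using hmemLp two_pos hL2) (by simpa using hp2) (hmemLp (by linarith) hLp)
  exact fun ε hε => exists_forall_norm_le_of_isLittleO_cobounded hdecay
    (fun _ => Real.sqrt_nonneg _) hε r0
end
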